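/- There are, up to isomorphism, exactly three (2)-pancyclic graphs on 19 vertices with at most 24 edges. -/

import Mathlib

open SimpleGraph

/-- The number of cycles of length `k` in `G`, counted as subgraphs of `G`
isomorphic to the cycle graph `C_k`. -/
noncomputable def cycleCount {V : Type*} (G : SimpleGraph V) (k : ℕ) : ℕ :=
  {H : G.Subgraph | Nonempty (H.coe ≃g cycleGraph k)}.ncard

/-- A graph on `v ≥ 3` vertices is `(r)`-pancyclic if it contains precisely `r`
cycles of every length from `3` to `v`. -/
def IsRPancyclic {V : Type*} [Fintype V] (G : SimpleGraph V) (r : ℕ) : Prop :=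
  3 ≤ Fintype.card V ∧
    ∀ k : ℕ, 3 ≤ k → k ≤ Fintype.card V → cycleCount G k = r

/-- There are, up to isomorphism, exactly `N` graphs on `v` vertices with at most
`b` edges satisfying the given pancyclicity property with parameter `r`. -/
def ExactlyNUpToIso (r N v b : ℕ) : Prop :=
  ∃ Gs : Fin N → SimpleGraph (Fin v),
    (∀ i j : Fin N, i ≠ j → IsEmpty (Gs i ≃g Gs j)) ∧
    (∀ i : Fin N, IsRPancyclic (Gs i) r ∧ (Gs i).edgeSet.ncard ≤ b) ∧
    (∀ (W : Type) [Fintype W] (G : SimpleGraph W), Fintype.card W = v →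
      G.edgeSet.ncard ≤ b → IsRPancyclic G r → ∃ i : Fin N, Nonempty (G ≃g Gs i))


section
namespace Pan

/-- Multiply by a power to shift: one step of the path enumeration. -/
def st (S B A : Nat) (ih : Nat → Nat → Nat) (av r bb : Nat) : Nat :=
  Nat.rec (motive := fun _ => Nat) (nat_lit 0) (fun av1 _ =>
    Nat.add (Nat.add (Nat.pow bb S)
      (Nat.mul ((ih av1) (Nat.land (Nat.div A (Nat.pow bb S)) av1)) B))
      (ih av r)) (Nat.add (Nat.xor av bb) (nat_lit 1))

/-- Path enumeration with generic stride `S` and base `B`. -/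
def go (S B A f : Nat) : Nat → Nat → Nat :=
  Nat.rec (motive := fun _ => Nat → Nat → Nat) (fun _ _ => nat_lit 0)
    (fun _ ih av m =>
      Nat.rec (motive := fun _ => Nat) (nat_lit 0)
        (fun m1 _ => st S B A ih av (Nat.land (Nat.succ m1) m1)
          (Nat.xor (Nat.succ m1) (Nat.land (Nat.succ m1) m1))) m) f

/-- The same step for the depth-limited enumeration. -/
def stD (A : Nat) (ih : Nat → Nat → Nat) (ih2 : Nat → Nat) (av r bb : Nat) : Nat :=
  Nat.rec (motive := fun _ => Nat) (nat_lit 0) (fun av1 _ =>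
    Nat.add (Nat.add (Nat.pow bb (nat_lit 152))
      (Nat.mul ((ih av1) (Nat.land (Nat.div A (Nat.pow bb (nat_lit 152))) av1)) (nat_lit 16)))
      (ih2 r)) (Nat.add (Nat.xor av bb) (nat_lit 1))

def loopD (A : Nat) (ih : Nat → Nat → Nat) (av f : Nat) : Nat → Nat :=
  Nat.rec (motive := fun _ => Nat → Nat) (fun _ => nat_lit 0)
    (fun _ ih2 m =>
      Nat.rec (motive := fun _ => Nat) (nat_lit 0)
        (fun m1 _ => stD A ih ih2 av (Nat.land (Nat.succ m1) m1)
          (Nat.xor (Nat.succ m1) (Nat.land (Nat.succ m1) m1))) m) f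

/-- Depth-limited path enumeration. -/
def goD (A d : Nat) : Nat → Nat → Nat :=
  Nat.rec (motive := fun _ => Nat → Nat → Nat) (fun _ _ => nat_lit 0)
    (fun _ ih av => loopD A ih av (nat_lit 19)) d

def full : Nat := nat_lit 524287

/-- Generating number of all paths from the vertex with bit `bv`. -/
def pathsG (S B A bv : Nat) : Nat :=
  go S B A (nat_lit 400) (Nat.xor full bv) (Nat.land (Nat.div A (Nat.pow bv S)) (Nat.xor full bv))

def paths (A bv : Nat) : Nat := pathsG (nat_lit 152) (nat_lit 16) A bv

def pathsD (A bv : Nat) : Nat :=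
  goD A (nat_lit 5) (Nat.xor full bv)
    (Nat.land (Nat.div A (Nat.pow bv (nat_lit 152))) (Nat.xor full bv))

/-- Extract the block belonging to the vertex with bit `bw`. -/
def ext (D bw : Nat) : Nat :=
  Nat.mod (Nat.div D (Nat.pow bw (nat_lit 152)))
    (nat_lit 5708990770823839524233143877797980545530986496)

/-- `∑ 5 * 16 ^ l`, `∑ 8 * 16 ^ l` for `l < 18`, and `∑ 2 * 16 ^ l` for `1 ≤ l < 18`. -/
def c5 : Nat := nat_lit 1574122160956548404565
def c8 : Nat := nat_lit 2518595457530477447304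
def tgt : Nat := nat_lit 629648864382619361824

def good (c : Nat) : Bool := Nat.beq (Nat.land (Nat.add c c5) c8) (nat_lit 0)

def cif (t e : Bool) (c : Bool) : Bool := Bool.rec (motive := fun _ => Bool) e t c

def cifN (t e : Nat) (c : Bool) : Nat := Bool.rec (motive := fun _ => Nat) e t c

def force (x : Nat) (k : Nat → Bool) : Bool :=
  Nat.rec (motive := fun _ => Bool) false (fun n _ => k n) (Nat.add x (nat_lit 1))

def allStep (body : Nat → Bool) (ih : Nat → Bool) (r bb : Nat) : Bool :=
  cif (ih r) false (force bb body)

/-- Check `body (2 ^ i)` for all bits `i` of the mask. -/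
def allBits (body : Nat → Bool) : Nat → Bool :=
  Nat.rec (motive := fun _ => Nat → Bool) (fun _ => true)
    (fun _ ih m =>
      Nat.rec (motive := fun _ => Bool) true
        (fun m1 _ => allStep body ih (Nat.land (Nat.succ m1) m1)
          (Nat.xor (Nat.succ m1) (Nat.land (Nat.succ m1) m1))) m) (nat_lit 19)

/-- Edge code: the two adjacency bits and a tag used only for hashing. -/
def code (bx bw : Nat) : Nat :=
  Nat.add (Nat.add (Nat.mul (Nat.pow bx (nat_lit 152)) bw) (Nat.mul (Nat.pow bw (nat_lit 152)) bx))
    (Nat.mul (Nat.mod (Nat.pow (Nat.add bx bw) (nat_lit 3)) (nat_lit 1000003)) (nat_lit 1048576))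

def row (A bx : Nat) : Nat := Nat.land (Nat.div A (Nat.pow bx (nat_lit 152))) full

def nxt (b : Nat) : Nat := Nat.mod (Nat.mul b (nat_lit 2)) full
def prv (b : Nat) : Nat := Nat.mod (Nat.mul b (nat_lit 262144)) full

/-- Final chord test: `A0` is a subgraph used for a cheap first test. -/
def fin3 (iso : Nat → Bool) (A c bx bw : Nat) : Bool :=
  cif (iso (Nat.xor A (code bx bw))) true
    (Nat.beq (Nat.add c (ext (paths A bx) bw)) tgt)

def fin2 (iso : Nat → Bool) (A c bx bw : Nat) : Bool :=
  cif (fin3 iso A c bx bw) true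
    (Nat.beq (Nat.mod (Nat.add c (ext (pathsD A bx) bw)) (nat_lit 1048576)) (nat_lit 139808))

def fin1 (iso : Nat → Bool) (A0 A c bx bw : Nat) : Bool :=
  cif (fin2 iso A c bx bw) true (good (Nat.add c (ext (paths A0 bx) bw)))

/-- Sub-mask of those `w` in the mask passing the test. -/
def filtStep (c D : Nat) (ih : Nat → Nat) (r bb : Nat) : Nat :=
  cifN (Nat.add bb (ih r)) (ih r) (good (Nat.add c (ext D bb)))

def filt (c D : Nat) : Nat → Nat :=
  Nat.rec (motive := fun _ => Nat → Nat) (fun _ => nat_lit 0)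
    (fun _ ih m =>
      Nat.rec (motive := fun _ => Nat) (nat_lit 0)
        (fun m1 _ => filtStep c D ih (Nat.land (Nat.succ m1) m1)
          (Nat.xor (Nat.succ m1) (Nat.land (Nat.succ m1) m1))) m) (nat_lit 19)

def forceN (x : Nat) (k : Nat → Nat) : Nat :=
  Nat.rec (motive := fun _ => Nat) (nat_lit 0) (fun n _ => k n) (Nat.add x (nat_lit 1))

/-- Filtered row: first with the subgraph `A0`, then with `A`. -/
def filtRow (A0 A c L bx : Nat) : Nat :=
  Nat.rec (motive := fun _ => Nat) (nat_lit 0)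
    (fun m1 _ => filt c (paths A bx) (Nat.succ m1)) (filt c (paths A0 bx) (row L bx))

/-- Filter all rows. `i` counts down, `bx = 2 ^ (19 - i)`. -/
def filtAll (A0 A c L : Nat) : Nat → Nat :=
  Nat.rec (motive := fun _ => Nat) (nat_lit 0)
    (fun i ih => forceN (Nat.pow (nat_lit 2) i) (fun bx =>
      forceN (filtRow A0 A c L bx) (fun rw => Nat.add (Nat.mul (Nat.pow bx (nat_lit 152)) rw) ih)))

/-- The bits of `L` from `p` on, together with the hash tag of `A`. -/
def tagged (A L : Nat) : Nat := Nat.lor L (Nat.land A (nat_lit 1152921504606322688))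

def above (L p : Nat) : Nat := Nat.mul (Nat.div L p) p

/-- One branching step of `node`. -/
def nodeStep (ih : Nat → Nat → Nat → Nat → Bool) (A c L bx bw : Nat) : Bool :=
  force (Nat.xor A (code bx bw)) (fun A' =>
    force (Nat.add c (ext (paths A bx) bw)) (fun c' =>
      force (tagged A' (above L (Nat.mul (Nat.mul (Nat.pow bx (nat_lit 152)) bw) (nat_lit 2)))) (fun L' =>
        ih A A' c' L')))

def nodeLast (iso : Nat → Bool) (A0 A c L : Nat) : Bool :=
  allBits (fun bx => allBits (fun bw => fin1 iso A0 A c bx bw) (row L bx)) full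

def nodeMid (ih : Nat → Nat → Nat → Nat → Bool) (A0 A c L : Nat) : Bool :=
  force (tagged A (filtAll A0 A c L (nat_lit 19))) (fun L' =>
    allBits (fun bx => allBits (fun bw => nodeStep ih A c L' bx bw) (row L' bx)) full)

/-- Exhaustive addition of up to `n + 1` further chords from the list `L`. -/
def node (iso : Nat → Bool) (n : Nat) : Nat → Nat → Nat → Nat → Bool :=
  Nat.rec (motive := fun _ => Nat → Nat → Nat → Nat → Bool)
    (fun A0 A c L => cif false (nodeLast iso A0 A c L) (Nat.beq c tgt))
    (fun _ ih A0 A c L => cif false (nodeMid ih A0 A c L) (Nat.beq c tgt)) n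

/-- Candidate mask for a new chord of the second Hamiltonian cycle at `bu`. -/
def cand (lm A bu : Nat) : Nat := Nat.land (row lm bu) (Nat.xor (row A bu) full)

/-- Branch on a new chord at `bu` from the mask `M`; at least two chords are available. -/
def needS (stepR : Nat → Nat → Nat → Nat → Nat → Bool) (A c R bs bu M : Nat) : Bool :=
  allBits (fun bw =>
    force (Nat.add c (ext (paths A bu) bw)) (fun c' =>
      cif (force (Nat.xor A (code bu bw)) (fun A' => stepR A' c' R bs bw)) true (good c'))) M

/-- Branch on the last chord at `bu`. -/
def needS1 (iso : Nat → Bool) (h1 A c bs bu M : Nat) : Bool :=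
  allBits (fun bw => fin1 iso h1 A c bu bw)
    (Nat.land M (Nat.add (nxt bs) (prv bs)))

/-- After an `R`-edge ending in `bu`. -/
def afterR (lm : Nat) (nd : Nat → Nat → Bool)
    (need : Nat → Nat → Nat → Nat → Nat → Nat → Bool)
    (A c R bs bu : Nat) : Bool :=
  cif
    (cif (nd A c)
      (allBits (fun bx => force (Nat.land (cand lm A bx) (Nat.sub (nat_lit 524288) (Nat.mul bx (nat_lit 2))))
        (fun M => need A c R bx bx M)) full)
      (Nat.beq (Nat.div c (nat_lit 295147905179352825856)) (nat_lit 2)))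
    (force (cand lm A bu) (fun M => need A c R bs bu M))
    (Nat.beq bu bs)

def optR (aft : Nat → Nat → Nat → Nat → Nat → Bool) (A c R bs be bu : Nat) : Bool :=
  cif (force (Nat.add R be) (fun R' => aft A c R' bs bu)) true (Nat.beq (Nat.land R be) (nat_lit 0))

def stepRG (aft : Nat → Nat → Nat → Nat → Nat → Bool) (A c R bs bv : Nat) : Bool :=
  force (nxt bv) (fun bn => force (prv bv) (fun bp =>
    cif (optR aft A c R bs bp bp) false (optR aft A c R bs bv bn)))

/-- All pairs not adjacent in `A`. -/
def startL (all A : Nat) : Nat := tagged A (Nat.xor all (Nat.land all A))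

/-- The trail search: `n + 1` chords still available. -/
def stepR (iso : Nat → Bool) (h1 lm all n : Nat) : Nat → Nat → Nat → Nat → Nat → Bool :=
  Nat.rec (motive := fun _ => Nat → Nat → Nat → Nat → Nat → Bool)
    (stepRG (afterR lm
      (fun A c => force (startL all A) (fun L => node iso (nat_lit 0) h1 A c L))
      (fun A c _ bs bu M => needS1 iso h1 A c bs bu M)))
    (fun n ih => stepRG (afterR lm
      (fun A c => force (startL all A) (fun L => node iso (Nat.succ n) h1 A c L))
      (needS ih))) n

/-- Matrix with row `f (2 ^ i)` for the vertex `i`. -/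
def rowsum (f : Nat → Nat) : Nat :=
  Nat.rec (motive := fun _ => Nat) (nat_lit 0)
    (fun i ih => Nat.add ih (Nat.mul (f (Nat.pow (nat_lit 2) i))
      (Nat.pow (Nat.pow (nat_lit 2) i) (nat_lit 152)))) (nat_lit 19)

def h1N : Nat := rowsum (fun b => Nat.add (nxt b) (prv b))

def allN : Nat := rowsum (fun b => Nat.sub (nat_lit 524288) (Nat.mul b (nat_lit 2)))

/-- Chords of circular length at most `a`, except the chord `(18, a - 1)`. -/
def lmN (a : Nat) : Nat :=
  Nat.xor (rowsum (fun b => Nat.mod (Nat.mul (2 ^ (a + 1) - 4 + (2 ^ 18 - 2 ^ (19 - a))) b) full))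
    (code (2 ^ 18) (2 ^ (a - 1)))

def addE (A x y : Nat) : Nat := Nat.xor A (code (2 ^ x) (2 ^ y))

def sol1 : Nat := addE (addE (addE (addE (addE h1N 0 4) 0 8) 1 5) 7 9) 7 10
def sol2 : Nat := addE (addE (addE (addE (addE h1N 0 4) 1 5) 5 7) 5 8) 6 17
def sol3 : Nat := addE (addE (addE (addE (addE h1N 0 4) 1 5) 6 8) 6 9) 7 18
def sol4 : Nat := addE (addE (addE (addE (addE h1N 0 4) 1 5) 5 16) 14 17) 15 17
def sol5 : Nat := addE (addE (addE (addE (addE h1N 0 4) 0 16) 0 17) 1 5) 7 18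
def sol6 : Nat := addE (addE (addE (addE (addE h1N 0 4) 1 5) 6 17) 15 18) 16 18

def isoT (A : Nat) : Bool :=
  (A.beq sol1).or ((A.beq sol2).or ((A.beq sol3).or ((A.beq sol4).or ((A.beq sol5).or (A.beq sol6)))))

def rootCheck (a : Nat) : Bool :=
  force h1N (fun h1 => force (lmN a) (fun lm => force allN (fun all =>
    force (Nat.pow (nat_lit 2) a) (fun ba =>
      force (Nat.xor h1 (code (nat_lit 1) ba)) (fun A =>
        force (Nat.add (nat_lit 295147905179352825856) (ext (paths h1 (nat_lit 1)) ba)) (fun c =>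
          stepR isoT h1 lm all (nat_lit 3) A c (nat_lit 0) (nat_lit 1) ba))))))

end Pan
end

section
namespace Pan

/-- Cycles of length `k` as graphs on the whole vertex set. -/
def CS {V : Type*} (G : SimpleGraph V) (k : ℕ) : Set (SimpleGraph V) :=
  {C | C ≤ G ∧ ∃ p : Fin k ↪ V, C = (cycleGraph k).map p}

lemma cyc_adj_succ {n : ℕ} (i : Fin (n + 2)) : (cycleGraph (n + 2)).Adj i (i + 1) := by
  rw [cycleGraph_adj]; right; abel

lemma cycleCount_eq {V : Type*} (G : SimpleGraph V) (n : ℕ) :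
    cycleCount G (n + 2) = (CS G (n + 2)).ncard := by
  unfold cycleCount
  have hverts : ∀ H : G.Subgraph, Nonempty (H.coe ≃g cycleGraph (n + 2)) →
      ∀ v, v ∈ H.verts ↔ ∃ w, H.Adj v w := by
    rintro H ⟨e⟩ v
    constructor
    · intro hv
      have h := cyc_adj_succ (e ⟨v, hv⟩)
      have h2 := e.symm.map_adj_iff.mpr h
      rw [e.symm_apply_apply] at h2
      exact ⟨_, h2⟩
    · rintro ⟨w, hw⟩; exact hw.fst_mem
  have himg : (fun H : G.Subgraph => H.spanningCoe) ''
      {H : G.Subgraph | Nonempty (H.coe ≃g cycleGraph (n + 2))} = CS G (n + 2) := by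
    ext C
    constructor
    · rintro ⟨H, ⟨e⟩, rfl⟩
      refine ⟨H.spanningCoe_le, ⟨⟨fun i => (e.symm i : V), ?_⟩, ?_⟩⟩
      · intro i j h
        exact e.symm.injective (Subtype.ext h)
      · ext a b
        simp only [Subgraph.spanningCoe_adj, SimpleGraph.map_adj, Function.Embedding.coeFn_mk]
        constructor
        · intro h
          refine ⟨e ⟨a, h.fst_mem⟩, e ⟨b, h.snd_mem⟩, ?_, congrArg Subtype.val (e.symm_apply_apply _), congrArg Subtype.val (e.symm_apply_apply _)⟩
          exact e.map_adj_iff.mpr h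
        · rintro ⟨u, v, h, rfl, rfl⟩
          exact e.symm.map_adj_iff.mpr h
    · rintro ⟨hle, p, rfl⟩
      refine ⟨⟨Set.range p, ((cycleGraph (n + 2)).map p).Adj, fun h => hle h, ?_, ?_⟩, ?_, ?_⟩
      · rintro v w ⟨_, a, b, _, rfl, rfl⟩
        exact ⟨a, rfl⟩
      · exact ⟨fun v w h => h.symm⟩
      · refine ⟨RelIso.symm ⟨Equiv.ofInjective p p.injective, ?_⟩⟩
        intro a b
        simp
      · ext a b
        simp
  rw [← himg, Set.InjOn.ncard_image]
  intro H hH K hK h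
  have hadj : ∀ a b, H.Adj a b ↔ K.Adj a b := fun a b => by
    have := congrArg (fun X : SimpleGraph V => X.Adj a b) h
    simpa using this
  apply Subgraph.ext
  · ext v
    rw [hverts H hH, hverts K hK]
    simp [hadj]
  · ext a b
    exact hadj a b

lemma CS_mono {V : Type*} {G G' : SimpleGraph V} (h : G ≤ G') (k : ℕ) : CS G k ⊆ CS G' k :=
  fun _ hC => ⟨hC.1.trans h, hC.2⟩

lemma cycleCount_mono {V : Type*} [Finite V] {G G' : SimpleGraph V} (h : G ≤ G') (n : ℕ) :
    cycleCount G (n + 2) ≤ cycleCount G' (n + 2) := by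
  rw [cycleCount_eq, cycleCount_eq]
  exact Set.ncard_le_ncard (CS_mono h _) (Set.toFinite _)

lemma cycleCount_iso_le {V W : Type*} [Finite V] [Finite W] {G : SimpleGraph V}
    {G' : SimpleGraph W} (e : G ≃g G') (n : ℕ) :
    cycleCount G (n + 2) ≤ cycleCount G' (n + 2) := by
  rw [cycleCount_eq, cycleCount_eq]
  apply Set.ncard_le_ncard_of_injOn (fun C => C.map e.toEquiv.toEmbedding)
  · rintro C ⟨hle, p, rfl⟩
    refine ⟨?_, p.trans e.toEquiv.toEmbedding, ?_⟩
    · rintro a b ⟨_, u, v, h, rfl, rfl⟩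
      exact e.map_adj_iff.mpr (hle h)
    · rw [SimpleGraph.map_map]
      rfl
  · intro C _ D _ h
    exact SimpleGraph.map_injective _ h

lemma cycleCount_iso {V W : Type*} [Finite V] [Finite W] {G : SimpleGraph V}
    {G' : SimpleGraph W} (e : G ≃g G') (n : ℕ) :
    cycleCount G (n + 2) = cycleCount G' (n + 2) :=
  le_antisymm (cycleCount_iso_le e n) (cycleCount_iso_le e.symm n)

lemma cycleCount_le {n : ℕ} (G : SimpleGraph (Fin n)) (k : ℕ) :
    cycleCount G (k + 2) ≤ n ^ (k + 2) := by
  rw [cycleCount_eq]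
  have hsub : CS G (k + 2) ⊆ Set.range (fun p : Fin (k + 2) ↪ Fin n => (cycleGraph (k + 2)).map p) := by
    rintro C ⟨_, p, rfl⟩
    exact ⟨p, rfl⟩
  refine (Set.ncard_le_ncard hsub (Set.toFinite _)).trans ?_
  rw [← Set.image_univ]
  refine (Set.ncard_image_le (Set.toFinite _)).trans ?_
  rw [Set.ncard_univ, Nat.card_eq_fintype_card, Fintype.card_embedding_eq]
  simpa using Nat.descFactorial_le_pow n (k + 2)

end Pan
end

section
namespace Pan

section
open Classical

/-- Number of paths with `l` edges from `u` to `y` whose later vertices lie in `av`. -/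
noncomputable def W {V : Type*} [Fintype V] [DecidableEq V] (G : SimpleGraph V) : ℕ → V → Finset V → V → ℕ
  | 0, u, _, y => if u = y then 1 else 0
  | l + 1, u, av, y => ∑ w ∈ av.filter (fun w => G.Adj u w), W G l w (av.erase w) y

/-- The paths counted by `W`, as functions. -/
noncomputable def PF {V : Type*} [Fintype V] [DecidableEq V] (G : SimpleGraph V) (l : ℕ) (u : V) (av : Finset V)
    (y : V) : Finset (Fin (l + 1) → V) :=
  Finset.univ.filter (fun p => Function.Injective p ∧ p 0 = u ∧ p (Fin.last l) = y ∧
    ∀ i : Fin l, G.Adj (p i.castSucc) (p i.succ) ∧ p i.succ ∈ av)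

variable {V : Type*} [Fintype V] [DecidableEq V] (G : SimpleGraph V)

lemma card_PF (l : ℕ) : ∀ (u : V) (av : Finset V) (y : V), u ∉ av →
    (PF G l u av y).card = W G l u av y := by
  induction l with
  | zero =>
    intro u av y _
    unfold W
    split_ifs with h
    · rw [Finset.card_eq_one]
      refine ⟨fun _ => u, ?_⟩
      ext p
      simp only [PF, Finset.mem_filter, Finset.mem_univ, true_and, Finset.mem_singleton]
      constructor
      · rintro ⟨_, h0, _⟩
        funext i
        rw [Fin.fin_one_eq_zero i, ← h0]
      · rintro rfl
        exact ⟨fun i j _ => by rw [Fin.fin_one_eq_zero i, Fin.fin_one_eq_zero j], rfl, h, fun i => i.elim0⟩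
    · rw [Finset.card_eq_zero]
      ext p
      simp only [PF, Finset.mem_filter, Finset.mem_univ, true_and, Finset.notMem_empty, iff_false]
      rintro ⟨_, h0, h1, _⟩
      exact h (h0.symm.trans h1)
  | succ l ih =>
    intro u av y hu
    unfold W
    rw [Finset.card_eq_sum_card_fiberwise (f := fun p => p 1) (t := av.filter (fun w => G.Adj u w))]
    · apply Finset.sum_congr rfl
      intro w hw
      rw [Finset.mem_filter] at hw
      rw [← ih w (av.erase w) y (Finset.notMem_erase _ _)]
      refine Finset.card_bij (fun p _ => Fin.tail p) ?_ ?_ ?_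
      · intro p hp
        simp only [PF, Finset.mem_filter, Finset.mem_univ, true_and] at hp ⊢
        obtain ⟨⟨hinj, h0, hl, hs⟩, h1⟩ := hp
        refine ⟨fun i j h => Fin.succ_injective _ (hinj h), h1, hl, fun i => ⟨?_, ?_⟩⟩
        · exact (hs i.succ).1
        · rw [Finset.mem_erase]
          refine ⟨?_, (hs i.succ).2⟩
          rw [← h1]
          intro h
          have := hinj h
          rw [Fin.ext_iff] at this
          simp at this
      · intro p hp q hq h
        simp only [PF, Finset.mem_filter, Finset.mem_univ, true_and] at hp hq
        rw [← Fin.cons_self_tail p, ← Fin.cons_self_tail q, h, hp.1.2.1, hq.1.2.1]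
      · intro q hq
        simp only [PF, Finset.mem_filter, Finset.mem_univ, true_and] at hq
        obtain ⟨hinj, h0, hl, hs⟩ := hq
        have hmem : ∀ i, q i ∈ av := by
          intro i
          refine Fin.cases ?_ (fun j => ?_) i
          · rw [h0]; exact hw.1
          · exact Finset.mem_of_mem_erase (hs j).2
        refine ⟨Fin.cons u q, ?_, Fin.tail_cons _ _⟩
        simp only [PF, Finset.mem_filter, Finset.mem_univ, true_and]
        refine ⟨⟨?_, rfl, ?_, ?_⟩, h0⟩
        · rw [Fin.cons_injective_iff]
          refine ⟨?_, hinj⟩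
          rintro ⟨i, hi⟩
          exact hu (hi ▸ hmem i)
        · rw [← Fin.succ_last, Fin.cons_succ]; exact hl
        · intro i
          rw [Fin.cons_succ]
          refine ⟨?_, hmem i⟩
          refine Fin.cases ?_ (fun j => ?_) i
          · rw [h0]; exact hw.2
          · rw [Fin.castSucc_succ, Fin.cons_succ]; exact (hs j).1
    · intro p hp
      simp only [PF, Finset.coe_filter, Finset.mem_univ, true_and, Set.mem_ofPred_eq,
        Finset.mem_filter] at hp ⊢
      obtain ⟨hinj, h0, hl, hs⟩ := hp
      have := hs 0
      rw [Fin.castSucc_zero, h0] at this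
      exact ⟨this.2, this.1⟩

end

lemma map_aut {V : Type*} {n : ℕ} (q : Fin n ↪ V) (e : cycleGraph n ≃g cycleGraph n) :
    (cycleGraph n).map (q ∘ e) = (cycleGraph n).map q := by
  ext a b
  rw [map_adj', map_adj']
  refine and_congr_right fun _ => ?_
  constructor
  · rintro ⟨u, v, h, rfl, rfl⟩
    exact ⟨e u, e v, e.map_adj_iff.mpr h, rfl, rfl⟩
  · rintro ⟨u, v, h, rfl, rfl⟩
    exact ⟨e.symm u, e.symm v, e.symm.map_adj_iff.mpr h, by simp, by simp⟩

/-- Translation automorphism. -/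
def rotA (n : ℕ) (i : Fin (n + 2)) : cycleGraph (n + 2) ≃g cycleGraph (n + 2) where
  toEquiv := Equiv.addLeft i
  map_rel_iff' := by
    intro a b
    simp only [cycleGraph_adj, Equiv.coe_addLeft, add_sub_add_left_eq_sub]

/-- Reflection automorphism. -/
def refA (n : ℕ) (i : Fin (n + 2)) : cycleGraph (n + 2) ≃g cycleGraph (n + 2) where
  toEquiv := Equiv.subLeft i
  map_rel_iff' := by
    intro a b
    simp only [cycleGraph_adj, Equiv.subLeft_apply, sub_sub_sub_cancel_left]
    exact or_comm

lemma last_eq (n : ℕ) : Fin.last (n + 1) = (-1 : Fin (n + 2)) := by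
  rw [eq_neg_iff_add_eq_zero]; exact Fin.last_add_one _

section
open Classical
variable {V : Type*} [Fintype V] [DecidableEq V] (G : SimpleGraph V)

/-- Adding an edge: new cycles are counted by paths. -/
lemma cycleCount_add {x y : V} (hxy : x ≠ y) (hG : ¬ G.Adj x y) (n : ℕ) :
    cycleCount (G ⊔ edge x y) (n + 3) =
      cycleCount G (n + 3) + W G (n + 2) x (Finset.univ.erase x) y := by
  rw [cycleCount_eq _ (n + 1), cycleCount_eq _ (n + 1), ← card_PF G _ _ _ _ (Finset.notMem_erase _ _)]
  set D : Set (SimpleGraph V) := {C ∈ CS (G ⊔ edge x y) (n + 3) | C.Adj x y} with hD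
  have hun : CS (G ⊔ edge x y) (n + 3) = CS G (n + 3) ∪ D := by
    ext C
    constructor
    · intro hC
      by_cases h : C.Adj x y
      · exact Or.inr ⟨hC, h⟩
      · refine Or.inl ⟨?_, hC.2⟩
        intro a b hab
        rcases hC.1 hab with h' | h'
        · exact h'
        · exfalso
          rw [edge_adj] at h'
          rcases h'.1 with ⟨rfl, rfl⟩ | ⟨rfl, rfl⟩
          · exact h hab
          · exact h hab.symm
    · rintro (hC | hC)
      · exact CS_mono le_sup_left _ hC
      · exact hC.1
  have hdis : Disjoint (CS G (n + 3)) D := by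
    rw [Set.disjoint_left]
    rintro C h1 h2
    exact hG (h1.1 h2.2)
  change (CS (G ⊔ edge x y) (n + 3)).ncard = (CS G (n + 3)).ncard + _
  rw [hun, Set.ncard_union_eq hdis (Set.toFinite _) (Set.toFinite _)]
  congr 1
  rw [← Set.ncard_coe_finset]
  symm
  refine Set.ncard_congr (fun p _ => (cycleGraph (n + 3)).map p) ?_ ?_ ?_
  · -- well defined
    intro p hp
    simp only [PF, Finset.coe_filter, Finset.mem_univ, true_and, Set.mem_ofPred_eq] at hp
    obtain ⟨hinj, h0, hl, hs⟩ := hp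
    have key : ∀ i : Fin (n + 3), (G ⊔ edge x y).Adj (p i) (p (i + 1)) := by
      intro i
      refine Fin.lastCases ?_ (fun j => ?_) i
      · rw [Fin.last_add_one, h0, hl]
        right
        rw [edge_adj]
        exact ⟨Or.inr ⟨rfl, rfl⟩, hxy.symm⟩
      · left
        rw [Fin.coeSucc_eq_succ]
        exact (hs j).1
    refine ⟨⟨?_, ⟨p, hinj⟩, rfl⟩, ?_⟩
    · rintro a b ⟨_, u, v, h, rfl, rfl⟩
      rw [cycleGraph_adj] at h
      rcases h with h | h
      · rw [sub_eq_iff_eq_add'] at h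
        rw [h, add_comm]; exact add_comm 1 v ▸ (key v).symm
      · rw [sub_eq_iff_eq_add'] at h
        rw [h]; exact add_comm 1 u ▸ (key u)
    · refine ⟨hxy, 0, Fin.last _, ?_, h0, hl⟩
      rw [cycleGraph_adj, last_eq]
      left; abel
  · -- injective
    intro p q hp hq h
    simp only [PF, Finset.coe_filter, Finset.mem_univ, true_and, Set.mem_ofPred_eq] at hp hq
    obtain ⟨pinj, p0, pl, ps⟩ := hp
    obtain ⟨qinj, q0, ql, qs⟩ := hq
    have h2 : ∀ i : Fin (n + 3), p i = q i → p (i - 1) = q (i - 1) → p (i + 1) = q (i + 1) := by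
      intro i hi hi'
      have h3 : ((cycleGraph (n + 3)).map p).Adj (p i) (p (i + 1)) :=
        ⟨fun h => by
          have h4 := pinj h
          rw [left_eq_add] at h4
          exact absurd h4 (by simp [Fin.ext_iff]), i, i + 1, cyc_adj_succ i, rfl, rfl⟩
      rw [h] at h3
      obtain ⟨_, u, v, h4, h5, h6⟩ := h3
      rw [hi] at h5
      have h7 := qinj h5
      subst h7
      rw [cycleGraph_adj] at h4
      rcases h4 with h4 | h4
      · exfalso
        have h8 : v = u - 1 := by rw [← h4]; abel
        rw [h8, ← hi'] at h6
        have h9 := pinj h6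
        have h10 : (1 : Fin (n + 3)) + 1 = 0 := by
          have h11 : u + 1 - (u - 1) = 0 := by rw [h9]; abel
          have h12 : u + 1 - (u - 1) = 1 + 1 := by abel
          rw [← h12, h11]
        rw [Fin.ext_iff, Fin.val_add] at h10
        simp at h10
        rw [Nat.mod_eq_of_lt (by omega)] at h10
        omega
      · have h8 : v = u + 1 := by rw [← h4]; abel
        rw [← h6, h8]
    have h3 : ∀ i : Fin (n + 3), p i = q i ∧ p (i - 1) = q (i - 1) := by
      intro i
      induction i using Fin.induction with
      | zero =>
        refine ⟨by rw [p0, q0], ?_⟩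
        rw [zero_sub, ← last_eq, pl, ql]
      | succ i ih =>
        rw [← Fin.coeSucc_eq_succ]
        refine ⟨h2 _ ih.1 ih.2, ?_⟩
        rw [add_sub_cancel_right]; exact ih.1
    funext i
    exact (h3 i).1
  · -- surjective
    rintro C ⟨⟨hle, q, rfl⟩, ⟨_, i, j, hij, hi, hj⟩⟩
    have main : ∀ p : Fin (n + 3) → V, Function.Injective p →
        (cycleGraph (n + 3)).map p = (cycleGraph (n + 3)).map q → p 0 = x → p (Fin.last _) = y →
        ∃ a, ∃ (_ : a ∈ (↑(PF G (n + 2) x (Finset.univ.erase x) y) : Set (Fin (n + 3) → V))),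
          (cycleGraph (n + 3)).map a = (cycleGraph (n + 3)).map q := by
      intro p pinj hpq p0 pl
      refine ⟨p, ?_, hpq⟩
      simp only [PF, Finset.coe_filter, Finset.mem_univ, true_and, Set.mem_ofPred_eq]
      refine ⟨pinj, p0, pl, fun t => ⟨?_, ?_⟩⟩
      · have h1 : ((cycleGraph (n + 3)).map p).Adj (p t.castSucc) (p t.succ) := by
          refine ⟨fun h => ?_, _, _, ?_, rfl, rfl⟩
          · have := pinj h
            rw [Fin.ext_iff] at this
            simp at this
          · rw [← Fin.coeSucc_eq_succ]
            exact cyc_adj_succ _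
        rw [hpq] at h1
        rcases hle h1 with h2 | h2
        · exact h2
        · exfalso
          rw [edge_adj] at h2
          rcases h2.1 with ⟨h3, h4⟩ | ⟨h3, h4⟩
          · have h5 := pinj (h3.trans p0.symm)
            have h6 := pinj (h4.trans pl.symm)
            rw [Fin.ext_iff] at h5 h6
            rw [Fin.val_castSucc, Fin.val_zero] at h5
            rw [Fin.val_succ, Fin.val_last] at h6
            omega
          · have h5 := pinj (h3.trans pl.symm)
            rw [Fin.ext_iff, Fin.val_castSucc, Fin.val_last] at h5
            omega
      · simp only [Finset.mem_erase, Finset.mem_univ, and_true]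
        intro h
        have h5 := pinj (h.trans p0.symm)
        rw [Fin.ext_iff] at h5
        simp at h5
    rw [cycleGraph_adj] at hij
    rcases hij with hij | hij
    · refine main (q ∘ rotA (n + 1) i) (q.injective.comp (rotA (n + 1) i).injective)
        (map_aut q _) ?_ ?_
      · show q (i + 0) = x
        rw [add_zero, hi]
      · show q (i + Fin.last _) = y
        rw [last_eq, ← hj, ← hij]
        congr 1; abel
    · refine main (q ∘ refA (n + 1) i) (q.injective.comp (refA (n + 1) i).injective)
        (map_aut q _) ?_ ?_
      · show q (i - 0) = x
        rw [sub_zero, hi]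
      · show q (i - Fin.last _) = y
        rw [last_eq, ← hj, ← hij]
        congr 1; abel
end
end Pan
end

section
namespace Pan

lemma force_eq (x : Nat) (k : Nat → Bool) : force x k = k x := rfl
lemma forceN_eq (x : Nat) (k : Nat → Nat) : forceN x k = k x := rfl
lemma cif_eq (t e c : Bool) : cif t e c = if c = true then t else e := by cases c <;> rfl

lemma st_eq (S B A : Nat) (ih : Nat → Nat → Nat) (av r bb : Nat) :
    st S B A ih av r bb =
      bb ^ S + ih (av ^^^ bb) ((A / bb ^ S) &&& (av ^^^ bb)) * B + ih av r := rfl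

lemma go_zero (S B A av m : Nat) : go S B A 0 av m = 0 := rfl

lemma go_mzero (S B A f av : Nat) : go S B A f av 0 = 0 := by cases f <;> rfl

lemma go_succ (S B A f av m : Nat) (hm : m ≠ 0) :
    go S B A (f + 1) av m = st S B A (go S B A f) av (m &&& (m - 1)) (m ^^^ (m &&& (m - 1))) := by
  cases m with
  | zero => exact absurd rfl hm
  | succ m => rfl

lemma loopD_mzero (A : Nat) (ih : Nat → Nat → Nat) (av f : Nat) : loopD A ih av f 0 = 0 := by
  cases f <;> rfl

lemma loopD_succ (A : Nat) (ih : Nat → Nat → Nat) (av f m : Nat) (hm : m ≠ 0) :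
    loopD A ih av (f + 1) m =
      (m ^^^ (m &&& (m - 1))) ^ 152 + ih (av ^^^ (m ^^^ (m &&& (m - 1))))
        ((A / (m ^^^ (m &&& (m - 1))) ^ 152) &&& (av ^^^ (m ^^^ (m &&& (m - 1))))) * 16 +
        loopD A ih av f (m &&& (m - 1)) := by
  cases m with
  | zero => exact absurd rfl hm
  | succ m => rfl

lemma goD_zero (A av m : Nat) : goD A 0 av m = 0 := rfl
lemma goD_succ (A d av m : Nat) : goD A (d + 1) av m = loopD A (goD A d) av 19 m := rfl

lemma lowbit : ∀ m : ℕ, m ≠ 0 → ∃ b, m.testBit b = true ∧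
    ∀ i, m.testBit i = true → (m - 1).testBit i = decide (i ≠ b) := by
  intro m
  induction m using Nat.strong_induction_on with
  | _ m ih =>
    intro hm
    rcases Nat.even_or_odd' m with ⟨k, rfl | rfl⟩
    · obtain ⟨b, hb, h⟩ := ih k (by omega) (by omega)
      refine ⟨b + 1, ?_, ?_⟩
      · rw [Nat.testBit_succ, Nat.mul_div_cancel_left k (by norm_num)]; exact hb
      · intro i hi
        cases i with
        | zero => rw [Nat.testBit_zero] at hi; simp at hi
        | succ i =>
          rw [Nat.testBit_succ, Nat.mul_div_cancel_left k (by norm_num)] at hi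
          rw [Nat.testBit_succ, show (2 * k - 1) / 2 = k - 1 by omega, h i hi]
          simp
    · refine ⟨0, ?_, ?_⟩
      · rw [Nat.testBit_zero]; simp
      · intro i hi
        cases i with
        | zero => rw [Nat.testBit_zero]; simp
        | succ i =>
          rw [Nat.testBit_succ, show (2 * k + 1) / 2 = k by omega] at hi
          rw [Nat.testBit_succ, show (2 * k + 1 - 1) / 2 = k by omega, hi]
          simp

/-- `m` is the bit mask of `s`. -/
def MS (m : ℕ) (s : Finset (Fin 19)) : Prop :=
  ∀ i : ℕ, m.testBit i = true ↔ ∃ h : i < 19, (⟨i, h⟩ : Fin 19) ∈ s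

lemma MS.zero {m : ℕ} {s : Finset (Fin 19)} (h : MS m s) : m = 0 ↔ s = ∅ := by
  constructor
  · rintro rfl
    ext x
    simp only [Finset.notMem_empty, iff_false]
    intro hx
    have := (h x).mpr ⟨x.2, hx⟩
    simp at this
  · rintro rfl
    apply Nat.eq_of_testBit_eq
    intro i
    have := h i
    simp at this
    simp [this]

lemma MS.step {m : ℕ} {s : Finset (Fin 19)} (h : MS m s) (hm : m ≠ 0) :
    ∃ x ∈ s, MS (m &&& (m - 1)) (s.erase x) ∧ m ^^^ (m &&& (m - 1)) = 2 ^ (x : ℕ) := by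
  obtain ⟨b, hb, hl⟩ := lowbit m hm
  obtain ⟨hb19, hbs⟩ := (h b).mp hb
  refine ⟨⟨b, hb19⟩, hbs, ?_, ?_⟩
  · intro i
    rw [Nat.testBit_and, Bool.and_eq_true]
    constructor
    · rintro ⟨h1, h2⟩
      rw [hl i h1] at h2
      obtain ⟨h3, h4⟩ := (h i).mp h1
      refine ⟨h3, Finset.mem_erase.mpr ⟨?_, h4⟩⟩
      simpa using h2
    · rintro ⟨h1, h2⟩
      rw [Finset.mem_erase] at h2
      have h3 := (h i).mpr ⟨h1, h2.2⟩
      refine ⟨h3, ?_⟩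
      rw [hl i h3]
      have := h2.1
      simpa using this
  · apply Nat.eq_of_testBit_eq
    intro i
    rw [Nat.testBit_xor, Nat.testBit_and, Nat.testBit_two_pow]
    by_cases h1 : m.testBit i = true
    · rw [h1, hl i h1]
      by_cases h2 : i = b
      · simp [h2]
      · simp [h2, Ne.symm h2]
    · have h2 : b ≠ i := by rintro rfl; exact h1 hb
      simp [h1, h2]

lemma MS.erase {m : ℕ} {s : Finset (Fin 19)} (h : MS m s) {x : Fin 19} (hx : x ∈ s) :
    MS (m ^^^ 2 ^ (x : ℕ)) (s.erase x) := by
  intro i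
  rw [Nat.testBit_xor, Nat.testBit_two_pow]
  by_cases h1 : (x : ℕ) = i
  · have h2 := (h x).mpr ⟨x.2, hx⟩
    subst h1
    simp [h2]
  · have h2 := h i
    simp only [h1, decide_false, Bool.xor_false, h2, Finset.mem_erase]
    constructor
    · rintro ⟨h3, h4⟩
      exact ⟨h3, fun h5 => h1 (by rw [← h5]), h4⟩
    · rintro ⟨h3, _, h4⟩
      exact ⟨h3, h4⟩

/-- `A` represents the adjacency of `G` with stride `S`. -/
def Rep (S A : ℕ) (G : SimpleGraph (Fin 19)) : Prop :=
  ∀ x y : Fin 19, A.testBit (S * x + y) = true ↔ G.Adj x y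

open Classical in
lemma MS.nbr {S A : ℕ} {G : SimpleGraph (Fin 19)} (hA : Rep S A G) {m : ℕ} {s : Finset (Fin 19)}
    (h : MS m s) (x : Fin 19) :
    MS ((A / (2 ^ (x : ℕ)) ^ S) &&& m) (s.filter (fun w => G.Adj x w)) := by
  intro i
  rw [Nat.testBit_and, ← pow_mul, ← Nat.shiftRight_eq_div_pow, Nat.testBit_shiftRight,
    Bool.and_eq_true, h i]
  constructor
  · rintro ⟨h1, h2, h3⟩
    refine ⟨h2, Finset.mem_filter.mpr ⟨h3, ?_⟩⟩
    rw [← hA x ⟨i, h2⟩]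
    rw [mul_comm S]
    exact h1
  · rintro ⟨h2, h3⟩
    rw [Finset.mem_filter] at h3
    refine ⟨?_, h2, h3.1⟩
    have := (hA x ⟨i, h2⟩).mpr h3.2
    rw [mul_comm S] at this
    exact this

section
open Classical
variable {G : SimpleGraph (Fin 19)}

/-- Truncated generating number of the paths from `w` to `y`. -/
noncomputable def T (G : SimpleGraph (Fin 19)) (B N : ℕ) (w : Fin 19) (av : Finset (Fin 19))
    (y : Fin 19) : ℕ :=
  ∑ l ∈ Finset.range N, B ^ l * W G l w av y

/-- Combination over all end vertices. -/
noncomputable def TT (G : SimpleGraph (Fin 19)) (S B N : ℕ) (w : Fin 19) (av : Finset (Fin 19)) : ℕ :=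
  ∑ y : Fin 19, 2 ^ (S * (y : ℕ)) * T G B N w av y

lemma T_succ (B N : ℕ) (w : Fin 19) (av : Finset (Fin 19)) (y : Fin 19) :
    T G B (N + 1) w av y = (if w = y then 1 else 0) +
      (∑ z ∈ av.filter (fun z => G.Adj w z), T G B N z (av.erase z) y) * B := by
  unfold T
  rw [Finset.sum_range_succ', add_comm]
  congr 1
  · simp [W]
  · rw [Finset.sum_comm, Finset.sum_mul]
    apply Finset.sum_congr rfl
    intro l _
    rw [W, Finset.mul_sum, Finset.sum_mul]
    apply Finset.sum_congr rfl
    intro z _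
    ring

lemma TT_succ (S B N : ℕ) (w : Fin 19) (av : Finset (Fin 19)) :
    TT G S B (N + 1) w av = (2 ^ (w : ℕ)) ^ S +
      (∑ z ∈ av.filter (fun z => G.Adj w z), TT G S B N z (av.erase z)) * B := by
  unfold TT
  simp only [T_succ, mul_add, Finset.sum_add_distrib]
  refine congrArg₂ (· + ·) ?_ ?_
  · simp [← pow_mul, mul_comm]
  · rw [Finset.sum_comm, Finset.sum_mul]
    apply Finset.sum_congr rfl
    intro y _
    rw [← Finset.mul_sum]
    ring

lemma go_spec {S B A : ℕ} (hA : Rep S A G) : ∀ (f N av m : ℕ) (sav sm : Finset (Fin 19)),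
    MS av sav → MS m sm → sm ⊆ sav → sav.card ≤ N → 20 * sav.card + sm.card ≤ f →
    go S B A f av m = ∑ w ∈ sm, TT G S B N w (sav.erase w) := by
  intro f
  induction f with
  | zero =>
    intro N av m sav sm _ _ _ _ hf
    have : sm = ∅ := by rw [← Finset.card_eq_zero]; omega
    rw [this, go_zero]; simp
  | succ f ih =>
    intro N av m sav sm hav hm hsub hN hf
    by_cases h0 : m = 0
    · rw [h0, go_mzero, (hm.zero).mp h0]; simp
    · obtain ⟨x, hx, hr, hbb⟩ := hm.step h0
      rw [go_succ _ _ _ _ _ _ h0, hbb, st_eq]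
      have hxs := hsub hx
      have hav1 := hav.erase hxs
      have hcard : (sav.erase x).card + 1 = sav.card := Finset.card_erase_add_one hxs
      have hcard2 : (sm.erase x).card + 1 = sm.card := Finset.card_erase_add_one hx
      obtain ⟨N, rfl⟩ : ∃ N', N = N' + 1 := ⟨N - 1, by omega⟩
      have hle : ((sav.erase x).filter (fun z => G.Adj x z)).card ≤ 19 := by
        simpa using Finset.card_le_univ ((sav.erase x).filter (fun z => G.Adj x z))
      rw [ih N _ _ _ _ hav1 (hav1.nbr hA x) (Finset.filter_subset _ _) (by omega) (by omega),
        ih (N + 1) _ _ _ _ hav hr ((Finset.erase_subset _ _).trans hsub) hN (by omega),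
        ← Finset.add_sum_erase _ _ hx, TT_succ]

lemma loopD_spec {A d : ℕ} (hA : Rep 152 A G)
    (ihd : ∀ (av m : ℕ) (sav sm : Finset (Fin 19)), MS av sav → MS m sm → sm ⊆ sav →
      goD A d av m = ∑ w ∈ sm, TT G 152 16 d w (sav.erase w)) :
    ∀ (f av m : ℕ) (sav sm : Finset (Fin 19)), MS av sav → MS m sm → sm ⊆ sav → sm.card ≤ f →
      loopD A (goD A d) av f m = ∑ w ∈ sm, TT G 152 16 (d + 1) w (sav.erase w) := by
  intro f
  induction f with
  | zero =>
    intro av m sav sm _ hm _ hf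
    have : sm = ∅ := by rw [← Finset.card_eq_zero]; omega
    rw [(hm.zero).mpr this, loopD_mzero, this]; simp
  | succ f ih =>
    intro av m sav sm hav hm hsub hf
    by_cases h0 : m = 0
    · rw [h0, loopD_mzero, (hm.zero).mp h0]; simp
    · obtain ⟨x, hx, hr, hbb⟩ := hm.step h0
      rw [loopD_succ _ _ _ _ _ h0, hbb]
      have hxs := hsub hx
      have hav1 := hav.erase hxs
      have hcard2 : (sm.erase x).card + 1 = sm.card := Finset.card_erase_add_one hx
      rw [ihd _ _ _ _ hav1 (hav1.nbr hA x) (Finset.filter_subset _ _),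
        ih _ _ _ _ hav hr ((Finset.erase_subset _ _).trans hsub) (by omega),
        ← Finset.add_sum_erase _ _ hx, TT_succ]

lemma goD_spec {A : ℕ} (hA : Rep 152 A G) : ∀ (d av m : ℕ) (sav sm : Finset (Fin 19)),
    MS av sav → MS m sm → sm ⊆ sav →
      goD A d av m = ∑ w ∈ sm, TT G 152 16 d w (sav.erase w) := by
  intro d
  induction d with
  | zero =>
    intro av m sav sm _ _ _
    rw [goD_zero]; simp [TT, T]
  | succ d ih =>
    intro av m sav sm hav hm hsub
    rw [goD_succ]
    refine loopD_spec hA ih 19 _ _ _ _ hav hm hsub ?_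
    simpa using Finset.card_le_univ sm

/-- Number of paths from `x` to `y` with `l + 1` edges. -/
noncomputable def P (G : SimpleGraph (Fin 19)) (x y : Fin 19) (l : ℕ) : ℕ :=
  W G (l + 1) x (Finset.univ.erase x) y

lemma MS_full : MS full Finset.univ := by
  intro i
  have : full = 2 ^ 19 - 1 := rfl
  rw [this, Nat.testBit_two_pow_sub_one]
  simp

lemma sum_TT (S B N : ℕ) (x : Fin 19) :
    ∑ w ∈ (Finset.univ.erase x).filter (fun w => G.Adj x w), TT G S B N w ((Finset.univ.erase x).erase w)
     = ∑ y : Fin 19, 2 ^ (S * (y : ℕ)) * ∑ l ∈ Finset.range N, B ^ l * P G x y l := by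
  unfold TT T P
  rw [Finset.sum_comm]
  apply Finset.sum_congr rfl
  intro y _
  rw [← Finset.mul_sum, Finset.sum_comm]
  congr 1
  apply Finset.sum_congr rfl
  intro l _
  rw [W, Finset.mul_sum]

lemma pathsG_spec {S B A : ℕ} (hA : Rep S A G) (x : Fin 19) :
    pathsG S B A (2 ^ (x : ℕ)) =
      ∑ y : Fin 19, 2 ^ (S * (y : ℕ)) * ∑ l ∈ Finset.range 18, B ^ l * P G x y l := by
  have hav := MS_full.erase (Finset.mem_univ x)
  rw [← sum_TT]
  have hc : ((Finset.univ : Finset (Fin 19)).erase x).card = 18 := by simp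
  refine go_spec hA 400 18 _ _ _ _ hav (hav.nbr hA x) (Finset.filter_subset _ _) hc.le ?_
  have : ((Finset.univ.erase x).filter (fun z => G.Adj x z)).card ≤ 18 := by
    rw [← hc]; exact Finset.card_le_card (Finset.filter_subset _ _)
  omega

lemma pathsD_spec {A : ℕ} (hA : Rep 152 A G) (x : Fin 19) :
    pathsD A (2 ^ (x : ℕ)) =
      ∑ y : Fin 19, 2 ^ (152 * (y : ℕ)) * ∑ l ∈ Finset.range 5, 16 ^ l * P G x y l := by
  have hav := MS_full.erase (Finset.mem_univ x)
  rw [← sum_TT]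
  exact goD_spec hA 5 _ _ _ _ hav (hav.nbr hA x) (Finset.filter_subset _ _)

lemma W_le (l : ℕ) : ∀ (u : Fin 19) (av : Finset (Fin 19)) (y : Fin 19), W G l u av y ≤ 19 ^ l := by
  induction l with
  | zero => intro u av y; unfold W; split_ifs <;> simp
  | succ l ih =>
    intro u av y
    unfold W
    refine (Finset.sum_le_card_nsmul _ _ _ (fun w _ => ih w _ y)).trans ?_
    rw [smul_eq_mul, pow_succ, mul_comm]
    refine Nat.mul_le_mul_left _ ?_
    simpa using Finset.card_le_univ (av.filter (fun w => G.Adj u w))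

lemma W_mono {G' : SimpleGraph (Fin 19)} (h : G ≤ G') (l : ℕ) :
    ∀ (u : Fin 19) (av : Finset (Fin 19)) (y : Fin 19), W G l u av y ≤ W G' l u av y := by
  induction l with
  | zero => intro u av y; unfold W; exact le_rfl
  | succ l ih =>
    intro u av y
    unfold W
    refine (Finset.sum_le_sum (fun w _ => ih w _ y)).trans ?_
    refine Finset.sum_le_sum_of_subset ?_
    intro w hw
    rw [Finset.mem_filter] at hw ⊢
    exact ⟨hw.1, h hw.2⟩

lemma P_mono {G' : SimpleGraph (Fin 19)} (h : G ≤ G') (x y : Fin 19) (l : ℕ) :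
    P G x y l ≤ P G' x y l := W_mono h _ _ _ _

lemma P_zero {x y : Fin 19} (h : ¬ G.Adj x y) : P G x y 0 = 0 := by
  unfold P
  rw [W]
  apply Finset.sum_eq_zero
  intro w hw
  rw [Finset.mem_filter] at hw
  rw [W, if_neg]
  rintro rfl
  exact h hw.2

end

lemma digit (S : ℕ) : ∀ (n : ℕ) (b : ℕ → ℕ) (_ : ∀ i, i < n → b i < 2 ^ S) (z : ℕ) (_ : z < n),
    (∑ i ∈ Finset.range n, 2 ^ (S * i) * b i) / 2 ^ (S * z) % 2 ^ S = b z := by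
  intro n
  induction n with
  | zero => intro b _ z hz; omega
  | succ n ih =>
    intro b hb z hz
    have h1 : ∑ i ∈ Finset.range (n + 1), 2 ^ (S * i) * b i =
        b 0 + 2 ^ S * ∑ i ∈ Finset.range n, 2 ^ (S * i) * b (i + 1) := by
      rw [Finset.sum_range_succ', add_comm, Finset.mul_sum]
      congr 1
      · simp
      · apply Finset.sum_congr rfl
        intro i _
        rw [mul_add, pow_add]; ring
    rw [h1]
    cases z with
    | zero =>
      simp only [mul_zero, pow_zero, Nat.div_one, Nat.add_mul_mod_self_left]
      exact Nat.mod_eq_of_lt (hb 0 (by omega))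
    | succ z =>
      rw [mul_add, mul_one, add_comm (S * z), pow_add, ← Nat.div_div_eq_div_mul,
        Nat.add_mul_div_left _ _ (by positivity), Nat.div_eq_of_lt (hb 0 (by omega)), zero_add]
      exact ih (fun i => b (i + 1)) (fun i hi => hb (i + 1) (by omega)) z (by omega)

lemma digitF (S : ℕ) (b : Fin 19 → ℕ) (hb : ∀ y, b y < 2 ^ S) (z : Fin 19) :
    (∑ y : Fin 19, 2 ^ (S * (y : ℕ)) * b y) / (2 ^ (z : ℕ)) ^ S % 2 ^ S = b z := by
  have h := digit S 19 (fun i => if h : i < 19 then b ⟨i, h⟩ else 0) (by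
    intro i hi
    simp only [hi, dif_pos]; exact hb _) z z.2
  rw [Finset.sum_range] at h
  simp only [Fin.is_lt, dif_pos] at h
  rw [← pow_mul, mul_comm (z : ℕ)]
  exact h

lemma block_lt (G : SimpleGraph (Fin 19)) (x y : Fin 19) {N : ℕ} (hN : N ≤ 18) :
    ∑ l ∈ Finset.range N, 16 ^ l * P G x y l < 2 ^ 152 := by
  calc ∑ l ∈ Finset.range N, 16 ^ l * P G x y l
      ≤ ∑ l ∈ Finset.range 18, 16 ^ l * P G x y l :=
        Finset.sum_le_sum_of_subset (Finset.range_mono hN)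
    _ ≤ ∑ l ∈ Finset.range 18, 16 ^ l * 19 ^ (l + 1) :=
        Finset.sum_le_sum (fun l _ => Nat.mul_le_mul_left _ (W_le _ _ _ _))
    _ < 2 ^ 152 := by decide +kernel

lemma ext_paths {G : SimpleGraph (Fin 19)} {A : ℕ} (hA : Rep 152 A G) (x y : Fin 19) :
    ext (paths A (2 ^ (x : ℕ))) (2 ^ (y : ℕ)) = ∑ l ∈ Finset.range 18, 16 ^ l * P G x y l := by
  have h : ext (paths A (2 ^ (x : ℕ))) (2 ^ (y : ℕ)) =
    (pathsG 152 16 A (2 ^ (x : ℕ))) / (2 ^ (y : ℕ)) ^ 152 % 2 ^ 152 := rfl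
  rw [h, pathsG_spec hA]
  exact digitF 152 _ (fun y => block_lt G x y le_rfl) y

lemma ext_pathsD {G : SimpleGraph (Fin 19)} {A : ℕ} (hA : Rep 152 A G) (x y : Fin 19) :
    ext (pathsD A (2 ^ (x : ℕ))) (2 ^ (y : ℕ)) = ∑ l ∈ Finset.range 5, 16 ^ l * P G x y l := by
  have h : ext (pathsD A (2 ^ (x : ℕ))) (2 ^ (y : ℕ)) =
    (pathsD A (2 ^ (x : ℕ))) / (2 ^ (y : ℕ)) ^ 152 % 2 ^ 152 := rfl
  rw [h, pathsD_spec hA]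
  exact digitF 152 _ (fun y => block_lt G x y (by norm_num)) y

end Pan
end

section
namespace Pan

/-- Build a graph edge by edge, counting cycles. -/
def big : List (Fin 19 × Fin 19) → ℕ × ℕ × Bool
  | [] => (0, 0, true)
  | (x, y) :: t =>
    ((big t).1 ||| (2 ^ (2000 * (x : ℕ) + (y : ℕ)) ||| 2 ^ (2000 * (y : ℕ) + (x : ℕ))),
      (big t).2.1 + (pathsG 2000 (2 ^ 100) (big t).1 (2 ^ (x : ℕ))) / (2 ^ (y : ℕ)) ^ 2000 % 2 ^ 2000,
      (big t).2.2 && decide (x ≠ y) && !((big t).1.testBit (2000 * (x : ℕ) + (y : ℕ))))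

/-- The Hamiltonian cycle. -/
def hl : List (Fin 19 × Fin 19) := (List.finRange 19).map (fun i => (i, i + 1))

def el1 : List (Fin 19 × Fin 19) := [(0, 4), (0, 8), (1, 5), (7, 9), (7, 10)] ++ hl
def el2 : List (Fin 19 × Fin 19) := [(0, 4), (1, 5), (5, 7), (5, 8), (6, 17)] ++ hl
def el3 : List (Fin 19 × Fin 19) := [(0, 4), (1, 5), (6, 8), (6, 9), (7, 18)] ++ hl

lemma big_h : (big hl).2 = ((2 ^ 100) ^ 17, true) := by decide +kernel
lemma big1 : (big el1).2 = (∑ i ∈ Finset.range 18, (2 ^ 100) ^ i * (if i = 0 then 0 else 2), true) := by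
  decide +kernel
lemma big2 : (big el2).2 = (∑ i ∈ Finset.range 18, (2 ^ 100) ^ i * (if i = 0 then 0 else 2), true) := by
  decide +kernel
lemma big3 : (big el3).2 = (∑ i ∈ Finset.range 18, (2 ^ 100) ^ i * (if i = 0 then 0 else 2), true) := by
  decide +kernel
end Pan
end

section
namespace Pan

/-- Count of cycles of length `i + 2`, zero for `i = 0`. -/
noncomputable def cd (G : SimpleGraph (Fin 19)) (i : ℕ) : ℕ := if i = 0 then 0 else cycleCount G (i + 2)

/-- `c` encodes the cycle counts of `G` in base `B`. -/
def Enc (B c : ℕ) (G : SimpleGraph (Fin 19)) : Prop := c = ∑ i ∈ Finset.range 18, B ^ i * cd G i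

lemma cd_add {G : SimpleGraph (Fin 19)} {x y : Fin 19} (hxy : x ≠ y) (hG : ¬ G.Adj x y) (i : ℕ) :
    cd (G ⊔ edge x y) i = cd G i + P G x y i := by
  cases i with
  | zero => rw [P_zero hG]; rfl
  | succ n =>
    simp only [cd, Nat.succ_ne_zero, if_false]
    exact cycleCount_add G hxy hG n

lemma Enc.add {B c : ℕ} {G : SimpleGraph (Fin 19)} (h : Enc B c G) {x y : Fin 19} (hxy : x ≠ y)
    (hG : ¬ G.Adj x y) :
    Enc B (c + ∑ l ∈ Finset.range 18, B ^ l * P G x y l) (G ⊔ edge x y) := by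
  unfold Enc at *
  rw [h, ← Finset.sum_add_distrib]
  apply Finset.sum_congr rfl
  intro i _
  rw [cd_add hxy hG, mul_add]

lemma cd_mono {G G' : SimpleGraph (Fin 19)} (h : G ≤ G') (i : ℕ) : cd G i ≤ cd G' i := by
  unfold cd
  split_ifs
  · exact le_rfl
  · exact cycleCount_mono h i

/-! ### Adjacency codes -/

lemma pos_inj {S : ℕ} (hS : 19 ≤ S) {a b c d : Fin 19}
    (h : S * (a : ℕ) + (b : ℕ) = S * (c : ℕ) + (d : ℕ)) : a = c ∧ b = d := by
  have hb : (b : ℕ) < S := lt_of_lt_of_le b.2 hS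
  have hd : (d : ℕ) < S := lt_of_lt_of_le d.2 hS
  have h1 := congrArg (· / S) h
  have h2 := congrArg (· % S) h
  simp only [Nat.mul_add_mod, Nat.mod_eq_of_lt hb, Nat.mod_eq_of_lt hd] at h2
  simp only [Nat.mul_add_div (by omega : 0 < S), Nat.div_eq_of_lt hb, Nat.div_eq_of_lt hd, add_zero] at h1
  exact ⟨Fin.ext h1, Fin.ext h2⟩

lemma two_bits {S : ℕ} (hS : 19 ≤ S) (x y u v : Fin 19) :
    (2 ^ (S * (x : ℕ) + (y : ℕ)) ||| 2 ^ (S * (y : ℕ) + (x : ℕ))).testBit (S * (u : ℕ) + (v : ℕ)) = true ↔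
      (u = x ∧ v = y) ∨ (u = y ∧ v = x) := by
  rw [Nat.testBit_or, Nat.testBit_two_pow, Nat.testBit_two_pow, Bool.or_eq_true, decide_eq_true_iff,
    decide_eq_true_iff]
  constructor
  · rintro (h | h)
    · obtain ⟨rfl, rfl⟩ := pos_inj hS h; exact Or.inl ⟨rfl, rfl⟩
    · obtain ⟨rfl, rfl⟩ := pos_inj hS h; exact Or.inr ⟨rfl, rfl⟩
  · rintro (⟨rfl, rfl⟩ | ⟨rfl, rfl⟩) <;> simp

lemma edge_adj' {x y : Fin 19} (hxy : x ≠ y) (u v : Fin 19) :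
    (edge x y).Adj u v ↔ (u = x ∧ v = y) ∨ (u = y ∧ v = x) := by
  rw [edge_adj]
  constructor
  · exact fun h => by rcases h.1 with h | h <;> simp_all
  · rintro (⟨rfl, rfl⟩ | ⟨rfl, rfl⟩)
    · exact ⟨Or.inl ⟨rfl, rfl⟩, hxy⟩
    · exact ⟨Or.inr ⟨rfl, rfl⟩, hxy.symm⟩

lemma Rep.or {S A : ℕ} (hS : 19 ≤ S) {G : SimpleGraph (Fin 19)} (h : Rep S A G) {x y : Fin 19}
    (hxy : x ≠ y) :
    Rep S (A ||| (2 ^ (S * (x : ℕ) + (y : ℕ)) ||| 2 ^ (S * (y : ℕ) + (x : ℕ)))) (G ⊔ edge x y) := by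
  intro u v
  rw [Nat.testBit_or, Bool.or_eq_true, two_bits hS, h u v, SimpleGraph.sup_adj, edge_adj' hxy]

/-- Mask of all row bits. -/
def rowMask : ℕ := rowsum (fun _ => full)

lemma rowMask_bit : ∀ u v : Fin 19, rowMask.testBit (152 * (u : ℕ) + (v : ℕ)) = true := by
  decide +kernel

lemma code_mask : ∀ x y : Fin 19, x ≠ y → code (2 ^ (x : ℕ)) (2 ^ (y : ℕ)) &&& rowMask =
    (2 ^ (152 * (x : ℕ) + (y : ℕ)) ||| 2 ^ (152 * (y : ℕ) + (x : ℕ))) := by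
  decide +kernel

lemma code_bit {x y : Fin 19} (hxy : x ≠ y) (u v : Fin 19) :
    (code (2 ^ (x : ℕ)) (2 ^ (y : ℕ))).testBit (152 * (u : ℕ) + (v : ℕ)) = true ↔
      (u = x ∧ v = y) ∨ (u = y ∧ v = x) := by
  rw [← two_bits (by norm_num : 19 ≤ 152), ← code_mask x y hxy, Nat.testBit_and, rowMask_bit,
    Bool.and_true]

lemma Rep.add {A : ℕ} {G : SimpleGraph (Fin 19)} (h : Rep 152 A G) {x y : Fin 19} (hxy : x ≠ y)
    (hG : ¬ G.Adj x y) :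
    Rep 152 (Nat.xor A (code (2 ^ (x : ℕ)) (2 ^ (y : ℕ)))) (G ⊔ edge x y) := by
  intro u v
  have e : Nat.xor A (code (2 ^ (x : ℕ)) (2 ^ (y : ℕ))) = A ^^^ code (2 ^ (x : ℕ)) (2 ^ (y : ℕ)) := rfl
  rw [e, Nat.testBit_xor, SimpleGraph.sup_adj, edge_adj' hxy, ← code_bit hxy, ← h u v]
  by_cases h1 : (code (2 ^ (x : ℕ)) (2 ^ (y : ℕ))).testBit (152 * (u : ℕ) + (v : ℕ)) = true
  · have h2 : ¬ A.testBit (152 * (u : ℕ) + (v : ℕ)) = true := by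
      rw [h u v]
      rcases (code_bit hxy u v).mp h1 with ⟨rfl, rfl⟩ | ⟨rfl, rfl⟩
      · exact hG
      · exact fun h3 => hG h3.symm
    simp [h1, h2]
  · simp [h1]

lemma Rep.unique {S A : ℕ} {G G' : SimpleGraph (Fin 19)} (h : Rep S A G) (h' : Rep S A G') : G = G' := by
  ext u v
  rw [← h u v, ← h' u v]

/-! ### The edge by edge construction -/

def lg : List (Fin 19 × Fin 19) → SimpleGraph (Fin 19)
  | [] => ⊥
  | (x, y) :: t => lg t ⊔ edge x y

lemma blockB_lt (G : SimpleGraph (Fin 19)) (x y : Fin 19) :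
    ∑ l ∈ Finset.range 18, (2 ^ 100) ^ l * P G x y l < 2 ^ 2000 := by
  calc ∑ l ∈ Finset.range 18, (2 ^ 100) ^ l * P G x y l
      ≤ ∑ l ∈ Finset.range 18, (2 ^ 100) ^ l * 19 ^ (l + 1) :=
        Finset.sum_le_sum (fun l _ => Nat.mul_le_mul_left _ (W_le _ _ _ _))
    _ < 2 ^ 2000 := by decide +kernel

lemma cd_bot (i : ℕ) : cd ⊥ i = 0 := by
  unfold cd
  split_ifs with h
  · rfl
  · rw [cycleCount_eq, Set.ncard_eq_zero (Set.toFinite _)]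
    ext C
    simp only [Set.mem_empty_iff_false, iff_false]
    rintro ⟨h1, p, rfl⟩
    have := h1 ((map_adj_apply (f := p)).mpr (cyc_adj_succ 0))
    exact this

lemma big_spec : ∀ l : List (Fin 19 × Fin 19), (big l).2.2 = true →
    Rep 2000 (big l).1 (lg l) ∧ Enc (2 ^ 100) (big l).2.1 (lg l) := by
  intro l
  induction l with
  | nil =>
    intro _
    refine ⟨fun x y => ?_, ?_⟩
    · simp [big, lg]
    · unfold Enc
      rw [Finset.sum_eq_zero]
      · rfl
      · intro i _
        rw [lg, cd_bot, mul_zero]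
  | cons e t ih =>
    obtain ⟨x, y⟩ := e
    intro h
    simp only [big, Bool.and_eq_true, Bool.not_eq_true'] at h
    obtain ⟨⟨h1, h2⟩, h3⟩ := h
    obtain ⟨hR, hE⟩ := ih h1
    have hxy : x ≠ y := by simpa using h2
    have hadj : ¬ (lg t).Adj x y := by
      rw [← hR x y, h3]; simp
    refine ⟨hR.or (by norm_num) hxy, ?_⟩
    have := hE.add hxy hadj
    simp only [big]
    rw [pathsG_spec hR, digitF 2000 _ (fun y => blockB_lt _ x y) y]
    exact this

lemma cd_lt (G : SimpleGraph (Fin 19)) {i : ℕ} (hi : i < 18) : cd G i < 2 ^ 100 := by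
  unfold cd
  split_ifs
  · norm_num
  · refine (cycleCount_le G i).trans_lt ?_
    calc 19 ^ (i + 2) ≤ 19 ^ 19 := Nat.pow_le_pow_right (by norm_num) (by omega)
      _ < 2 ^ 100 := by norm_num

lemma Enc.inj {c : ℕ} {G : SimpleGraph (Fin 19)} (h : Enc (2 ^ 100) c G) (d : ℕ → ℕ)
    (hd : ∀ i, i < 18 → d i < 2 ^ 100) (hc : c = ∑ i ∈ Finset.range 18, (2 ^ 100) ^ i * d i) {i : ℕ}
    (hi : i < 18) : cd G i = d i := by
  unfold Enc at h
  simp only [← pow_mul] at h hc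
  rw [← digit 100 18 (cd G) (fun i hi => cd_lt G hi) i hi, ← h, hc, digit 100 18 d hd i hi]

/-! ### The tests -/

lemma nbeq {a b : ℕ} : Nat.beq a b = true ↔ a = b := Nat.beq_eq ▸ Iff.rfl

lemma split_sum (f : ℕ → ℕ) : ∑ l ∈ Finset.range 18, 16 ^ l * f l =
    ∑ l ∈ Finset.range 5, 16 ^ l * f l + 1048576 * ∑ l ∈ Finset.range 13, 16 ^ l * f (5 + l) := by
  have h := Finset.sum_range_add (fun l => 16 ^ l * f l) 5 13
  rw [show (18 : ℕ) = 5 + 13 from rfl, h, Finset.mul_sum]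
  refine congrArg₂ (· + ·) rfl ?_
  apply Finset.sum_congr rfl
  intro l _
  rw [pow_add, show (16 : ℕ) ^ 5 = 1048576 by norm_num, mul_assoc]

lemma c8_bits : ∀ j : Fin 72, c8.testBit j = decide ((j : ℕ) % 4 = 3) := by decide +kernel

lemma good_of (d : ℕ → ℕ) (hd : ∀ i, i < 18 → d i ≤ 2) :
    good (∑ i ∈ Finset.range 18, 16 ^ i * d i) = true := by
  have e : good (∑ i ∈ Finset.range 18, 16 ^ i * d i) =
    Nat.beq ((∑ i ∈ Finset.range 18, 16 ^ i * d i + c5) &&& c8) 0 := rfl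
  have e5 : c5 = ∑ i ∈ Finset.range 18, 16 ^ i * 5 := by decide +kernel
  rw [e, nbeq]
  apply Nat.eq_of_testBit_eq
  intro j
  rw [Nat.testBit_and, Nat.zero_testBit]
  by_cases hj : j < 72
  · rw [c8_bits ⟨j, hj⟩]
    by_cases h3 : j % 4 = 3
    · have hs : ∑ i ∈ Finset.range 18, 16 ^ i * d i + c5 =
          ∑ i ∈ Finset.range 18, 2 ^ (4 * i) * (d i + 5) := by
        rw [e5, ← Finset.sum_add_distrib]
        apply Finset.sum_congr rfl
        intro i _
        rw [pow_mul]; ring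
      have hdig := digit 4 18 (fun i => d i + 5) (fun i hi => by have := hd i hi; norm_num; omega)
        (j / 4) (by omega)
      rw [← hs] at hdig
      set N := ∑ i ∈ Finset.range 18, 16 ^ i * d i + c5
      have hq := hd (j / 4) (by omega)
      have hjj : j = 4 * (j / 4) + 3 := by omega
      have h1 : N.testBit j = (N / 2 ^ (4 * (j / 4)) % 2 ^ 4).testBit 3 := by
        rw [Nat.testBit_mod_two_pow, ← Nat.shiftRight_eq_div_pow, Nat.testBit_shiftRight, ← hjj]
        simp
      rw [h1, hdig, Nat.testBit_lt_two_pow (by norm_num; omega)]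
      rfl
    · simp [h3]
  · rw [Nat.testBit_lt_two_pow (x := c8) (i := j)]
    · simp
    · calc c8 < 2 ^ 72 := by decide +kernel
        _ ≤ 2 ^ j := Nat.pow_le_pow_right (by norm_num) (by omega)

/-- All cycle counts are two. -/
def Pan2 (G : SimpleGraph (Fin 19)) : Prop := ∀ i, 1 ≤ i → i < 18 → cycleCount G (i + 2) = 2

lemma Pan2.cd {G : SimpleGraph (Fin 19)} (h : Pan2 G) {i : ℕ} (hi : i < 18) :
    cd G i = if i = 0 then 0 else 2 := by
  unfold Pan.cd
  split_ifs with h0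
  · rfl
  · exact h i (by omega) hi

lemma Pan2.cd_le {G : SimpleGraph (Fin 19)} (h : Pan2 G) {i : ℕ} (hi : i < 18) : Pan.cd G i ≤ 2 := by
  rw [h.cd hi]; split_ifs <;> norm_num

lemma tgt_eq : tgt = ∑ i ∈ Finset.range 18, 16 ^ i * (if i = 0 then 0 else 2) := by decide +kernel

lemma Pan2.tgt {G : SimpleGraph (Fin 19)} (h : Pan2 G) {c : ℕ} (hc : Enc 16 c G) : c = tgt := by
  rw [hc, tgt_eq]
  apply Finset.sum_congr rfl
  intro i hi
  rw [h.cd (Finset.mem_range.mp hi)]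

/-- The stale test succeeds on edges of the final graph. -/
lemma good_stale {Gf G G0 : SimpleGraph (Fin 19)} (hf : Pan2 Gf) {c A0 : ℕ} (hc : Enc 16 c G)
    (hA0 : Rep 152 A0 G0) (h0 : G0 ≤ G) {x y : Fin 19} (hxy : x ≠ y) (hG : ¬ G.Adj x y)
    (hle : G ⊔ edge x y ≤ Gf) :
    good (c + ext (paths A0 (2 ^ (x : ℕ))) (2 ^ (y : ℕ))) = true := by
  rw [ext_paths hA0, hc, ← Finset.sum_add_distrib]
  simp only [← mul_add]
  apply good_of
  intro i hi
  calc cd G i + P G0 x y i ≤ cd G i + P G x y i := Nat.add_le_add_left (P_mono h0 _ _ _) _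
    _ = cd (G ⊔ edge x y) i := (cd_add hxy hG i).symm
    _ ≤ cd Gf i := cd_mono hle i
    _ ≤ 2 := hf.cd_le hi

lemma Enc.add16 {c A : ℕ} {G : SimpleGraph (Fin 19)} (h : Enc 16 c G) (hA : Rep 152 A G)
    {x y : Fin 19} (hxy : x ≠ y) (hG : ¬ G.Adj x y) :
    Enc 16 (Nat.add c (ext (paths A (2 ^ (x : ℕ))) (2 ^ (y : ℕ)))) (G ⊔ edge x y) := by
  rw [ext_paths hA]
  exact h.add hxy hG

/-- The final chord tests succeed on the last edge. -/
lemma fin1_sound {iso : ℕ → Bool} {Gf G G0 : SimpleGraph (Fin 19)} (hf : Pan2 Gf) {c A A0 : ℕ}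
    (hc : Enc 16 c G) (hA : Rep 152 A G)
    (hA0 : Rep 152 A0 G0) (h0 : G0 ≤ G) {x y : Fin 19} (hxy : x ≠ y) (hG : ¬ G.Adj x y)
    (hle : G ⊔ edge x y = Gf)
    (h : fin1 iso A0 A c (2 ^ (x : ℕ)) (2 ^ (y : ℕ)) = true) :
    ∃ A', iso A' = true ∧ Rep 152 A' Gf := by
  have h1 : good (Nat.add c (ext (paths A0 (2 ^ (x : ℕ))) (2 ^ (y : ℕ)))) = true :=
    good_stale hf hc hA0 h0 hxy hG hle.le
  have h3 : Nat.add c (ext (paths A (2 ^ (x : ℕ))) (2 ^ (y : ℕ))) = tgt :=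
    hf.tgt (hle ▸ hc.add16 hA hxy hG)
  have h2 : Nat.mod (Nat.add c (ext (pathsD A (2 ^ (x : ℕ))) (2 ^ (y : ℕ)))) 1048576 = 139808 := by
    have h4 : (c + ∑ l ∈ Finset.range 18, 16 ^ l * P G x y l) = tgt := by
      rw [← ext_paths hA]; exact h3
    rw [ext_pathsD hA]
    change (c + ∑ l ∈ Finset.range 5, 16 ^ l * P G x y l) % 1048576 = _
    have h5 := split_sum (P G x y)
    rw [h5, ← add_assoc] at h4
    have h6 : tgt % 1048576 = 139808 := by decide +kernel
    rw [← h6, ← h4, Nat.add_mul_mod_self_left]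
  refine ⟨_, ?_, hle ▸ hA.add hxy hG⟩
  rw [fin1, cif_eq, if_pos h1, fin2, cif_eq, if_pos (by rw [nbeq]; exact h2), fin3,
    cif_eq, if_pos (by rw [nbeq]; exact h3)] at h
  exact h

end Pan
end

section
namespace Pan

/-! ### Loops over masks -/

/-- `allBits` with explicit fuel. -/
def allAux (body : Nat → Bool) (f : Nat) : Nat → Bool :=
  Nat.rec (motive := fun _ => Nat → Bool) (fun _ => true)
    (fun _ ih m =>
      Nat.rec (motive := fun _ => Bool) true
        (fun m1 _ => allStep body ih (Nat.land (Nat.succ m1) m1)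
          (Nat.xor (Nat.succ m1) (Nat.land (Nat.succ m1) m1))) m) f

lemma allAux_succ (body : Nat → Bool) (f m : Nat) (hm : m ≠ 0) :
    allAux body (f + 1) m = if body (m ^^^ (m &&& (m - 1))) = true then
      allAux body f (m &&& (m - 1)) else false := by
  cases m with
  | zero => exact absurd rfl hm
  | succ m => rw [← cif_eq]; rfl

lemma allAux_spec (body : Nat → Bool) : ∀ (f m : ℕ) (s : Finset (Fin 19)), MS m s → s.card ≤ f →
    allAux body f m = true → ∀ x ∈ s, body (2 ^ (x : ℕ)) = true := by
  intro f
  induction f with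
  | zero =>
    intro m s _ hs _ x hx
    have : s = ∅ := by rw [← Finset.card_eq_zero]; omega
    rw [this] at hx; simp at hx
  | succ f ih =>
    intro m s hm hs h x hx
    by_cases h0 : m = 0
    · rw [(hm.zero).mp h0] at hx; simp at hx
    · obtain ⟨z, hz, hr, hbb⟩ := hm.step h0
      rw [allAux_succ _ _ _ h0, hbb] at h
      have hcard2 : (s.erase z).card + 1 = s.card := Finset.card_erase_add_one hz
      split_ifs at h with hb
      by_cases hxz : x = z
      · rw [hxz]; exact hb
      · exact ih _ _ hr (by omega) h x (Finset.mem_erase.mpr ⟨hxz, hx⟩)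

lemma allBits_spec {body : Nat → Bool} {m : ℕ} {s : Finset (Fin 19)} (hm : MS m s)
    (h : allBits body m = true) {x : Fin 19} (hx : x ∈ s) : body (2 ^ (x : ℕ)) = true :=
  allAux_spec body 19 m s hm (by simpa using Finset.card_le_univ s) h x hx

lemma allBits_full {body : Nat → Bool} (h : allBits body full = true) (x : Fin 19) :
    body (2 ^ (x : ℕ)) = true := allBits_spec MS_full h (Finset.mem_univ x)

lemma MS_row (L : ℕ) (x : Fin 19) : MS (row L (2 ^ (x : ℕ)))
    (Finset.univ.filter (fun w : Fin 19 => L.testBit (152 * (x : ℕ) + (w : ℕ)) = true)) := by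
  intro i
  have e : row L (2 ^ (x : ℕ)) = (L / (2 ^ (x : ℕ)) ^ 152) &&& full := rfl
  rw [e, Nat.testBit_and, ← pow_mul, ← Nat.shiftRight_eq_div_pow, Nat.testBit_shiftRight,
    Bool.and_eq_true, MS_full i, mul_comm 152]
  simp only [Finset.mem_univ, Finset.mem_filter, true_and]
  constructor
  · rintro ⟨h1, h2, -⟩; exact ⟨h2, h1⟩
  · rintro ⟨h1, h2⟩; exact ⟨h2, h1, trivial⟩

/-- `filt` with explicit fuel. -/
def filtAux (c D f : Nat) : Nat → Nat :=
  Nat.rec (motive := fun _ => Nat → Nat) (fun _ => nat_lit 0)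
    (fun _ ih m =>
      Nat.rec (motive := fun _ => Nat) (nat_lit 0)
        (fun m1 _ => filtStep c D ih (Nat.land (Nat.succ m1) m1)
          (Nat.xor (Nat.succ m1) (Nat.land (Nat.succ m1) m1))) m) f

lemma cifN_eq (t e : ℕ) (c : Bool) : cifN t e c = if c = true then t else e := by cases c <;> rfl

lemma filtStep_eq (c D : Nat) (ih : Nat → Nat) (r bb : Nat) :
    filtStep c D ih r bb = if good (c + ext D bb) = true then bb + ih r else ih r := by
  rw [filtStep, cifN_eq, Nat.add_eq, Nat.add_eq]

lemma filtAux_mzero (c D f : Nat) : filtAux c D f 0 = 0 := by cases f <;> rfl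

lemma filtAux_succ (c D f m : Nat) (hm : m ≠ 0) :
    filtAux c D (f + 1) m = filtStep c D (filtAux c D f) (m &&& (m - 1)) (m ^^^ (m &&& (m - 1))) := by
  cases m with
  | zero => exact absurd rfl hm
  | succ m => rfl

lemma testBit_two_pow_add : ∀ (x m : ℕ), m.testBit x = false →
    ∀ i, (2 ^ x + m).testBit i = (decide (x = i) || m.testBit i) := by
  intro x
  induction x with
  | zero =>
    intro m hm i
    rw [Nat.testBit_zero] at hm
    have hm : m % 2 = 0 := by simpa using hm
    cases i with
    | zero => rw [Nat.testBit_zero]; simp; omega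
    | succ i =>
      rw [Nat.testBit_succ, Nat.testBit_succ, show (2 ^ 0 + m) / 2 = m / 2 by norm_num; omega]
      simp
  | succ x ih =>
    intro m hm i
    rw [Nat.testBit_succ] at hm
    have h2 : (2 ^ (x + 1) + m) / 2 = 2 ^ x + m / 2 := by rw [pow_succ]; omega
    cases i with
    | zero =>
      rw [Nat.testBit_zero, Nat.testBit_zero, show (2 ^ (x + 1) + m) % 2 = m % 2 by rw [pow_succ]; omega]
      simp
    | succ i =>
      rw [Nat.testBit_succ, Nat.testBit_succ, h2, ih _ hm]
      simp

lemma MS.add {m : ℕ} {s : Finset (Fin 19)} (h : MS m s) {x : Fin 19} (hx : x ∉ s) :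
    MS (2 ^ (x : ℕ) + m) (insert x s) := by
  have h1 : m.testBit x = false := by
    rw [Bool.eq_false_iff]
    intro h2
    obtain ⟨_, h3⟩ := (h x).mp h2
    exact hx h3
  intro i
  rw [testBit_two_pow_add _ _ h1, Bool.or_eq_true, h i]
  simp only [Finset.mem_insert, decide_eq_true_iff]
  constructor
  · rintro (rfl | ⟨h3, h4⟩)
    · exact ⟨x.2, Or.inl rfl⟩
    · exact ⟨h3, Or.inr h4⟩
  · rintro ⟨h3, h4 | h4⟩
    · exact Or.inl (by rw [← h4])
    · exact Or.inr ⟨h3, h4⟩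

lemma filtAux_spec (c D : ℕ) : ∀ (f m : ℕ) (s : Finset (Fin 19)), MS m s → s.card ≤ f →
    MS (filtAux c D f m) (s.filter (fun w : Fin 19 => good (c + ext D (2 ^ (w : ℕ))) = true)) := by
  intro f
  induction f with
  | zero =>
    intro m s hm hs
    have : s = ∅ := by rw [← Finset.card_eq_zero]; omega
    rw [(hm.zero).mpr this, filtAux_mzero, this]
    intro i; simp
  | succ f ih =>
    intro m s hm hs
    by_cases h0 : m = 0
    · rw [(hm.zero).mp h0, h0, filtAux_mzero]
      intro i; simp
    · obtain ⟨z, hz, hr, hbb⟩ := hm.step h0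
      have hcard2 : (s.erase z).card + 1 = s.card := Finset.card_erase_add_one hz
      rw [filtAux_succ _ _ _ _ h0, hbb, filtStep_eq]
      have h1 := ih _ _ hr (by omega)
      conv => arg 2; rw [← Finset.insert_erase hz, Finset.filter_insert]
      split_ifs with hg
      · exact h1.add (by simp)
      · exact h1

lemma filt_spec (c D : ℕ) {m : ℕ} {s : Finset (Fin 19)} (hm : MS m s) :
    MS (filt c D m) (s.filter (fun w : Fin 19 => good (c + ext D (2 ^ (w : ℕ))) = true)) :=
  filtAux_spec c D 19 m s hm (by simpa using Finset.card_le_univ s)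

lemma filt_zero (c D : ℕ) : filt c D 0 = 0 := rfl

lemma filtRow_eq (A0 A c L bx : ℕ) :
    filtRow A0 A c L bx = filt c (paths A bx) (filt c (paths A0 bx) (row L bx)) := by
  unfold filtRow
  generalize filt c (paths A0 bx) (row L bx) = m
  generalize paths A bx = D
  cases m with
  | zero => exact (filt_zero c D).symm
  | succ n => rfl

lemma MS.lt {m : ℕ} {s : Finset (Fin 19)} (h : MS m s) : m < 2 ^ 19 := by
  apply Nat.lt_pow_two_of_testBit
  intro i hi
  rw [Bool.eq_false_iff]
  intro h2
  obtain ⟨h3, _⟩ := (h i).mp h2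
  omega

lemma filtAll_succ (A0 A c L i : ℕ) : filtAll A0 A c L (i + 1) =
    2 ^ (152 * i) * filtRow A0 A c L (2 ^ i) + filtAll A0 A c L i := by
  rw [mul_comm 152, pow_mul]; rfl

lemma filtAll_spec (A0 A c L : ℕ) : ∀ i, i ≤ 19 → filtAll A0 A c L i < 2 ^ (152 * i) ∧
    ∀ x : Fin 19, (x : ℕ) < i → ∀ w : Fin 19, (filtRow A0 A c L (2 ^ (x : ℕ))).testBit w = true →
      (filtAll A0 A c L i).testBit (152 * (x : ℕ) + w) = true := by
  intro i
  induction i with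
  | zero => intro _; exact ⟨by norm_num [filtAll], fun x hx => by omega⟩
  | succ i ih =>
    intro hi
    obtain ⟨h1, h2⟩ := ih (by omega)
    have hms : filtRow A0 A c L (2 ^ i) < 2 ^ 19 := by
      rw [filtRow_eq]
      exact (filt_spec c _ (filt_spec c _ (MS_row L ⟨i, by omega⟩))).lt
    rw [filtAll_succ]
    refine ⟨?_, ?_⟩
    · have : 2 ^ (152 * (i + 1)) = 2 ^ (152 * i) * 2 ^ 152 := by rw [← pow_add]; congr 1
      rw [this]
      have h3 : filtRow A0 A c L (2 ^ i) + 1 ≤ 2 ^ 152 := by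
        have : (2 : ℕ) ^ 19 ≤ 2 ^ 152 := Nat.pow_le_pow_right (by norm_num) (by norm_num)
        omega
      calc _ < 2 ^ (152 * i) * filtRow A0 A c L (2 ^ i) + 2 ^ (152 * i) := Nat.add_lt_add_left h1 _
        _ = 2 ^ (152 * i) * (filtRow A0 A c L (2 ^ i) + 1) := by ring
        _ ≤ _ := Nat.mul_le_mul_left _ h3
    · intro x hx w hw
      rw [Nat.testBit_two_pow_mul_add _ h1]
      by_cases hxi : (x : ℕ) < i
      · rw [if_pos (by have := w.2; omega)]
        exact h2 x hxi w hw
      · have hxi : (x : ℕ) = i := by omega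
        rw [hxi] at hw
        rw [if_neg (by omega), hxi, Nat.add_sub_cancel_left]
        exact hw

/-! ### States -/

/-- Search state. -/
structure St (Gf : SimpleGraph (Fin 19)) (A c : ℕ) (G : SimpleGraph (Fin 19)) (r : ℕ) : Prop where
  rep : Rep 152 A G
  enc : Enc 16 c G
  le : G ≤ Gf
  rem : (Gf \ G).edgeSet.ncard ≤ r

lemma sub_edge {Gf G : SimpleGraph (Fin 19)} {x y : Fin 19} (hle : G ≤ Gf) (h : Gf.Adj x y) :
    G ⊔ edge x y ≤ Gf := by
  refine sup_le hle ?_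
  intro u v huv
  rcases (edge_adj' h.ne u v).mp huv with ⟨rfl, rfl⟩ | ⟨rfl, rfl⟩
  · exact h
  · exact h.symm

lemma St.add {Gf G : SimpleGraph (Fin 19)} {A c r : ℕ} (h : St Gf A c G (r + 1)) {x y : Fin 19}
    (hG : ¬ G.Adj x y) (hf : Gf.Adj x y) :
    St Gf (Nat.xor A (code (2 ^ (x : ℕ)) (2 ^ (y : ℕ))))
      (Nat.add c (ext (paths A (2 ^ (x : ℕ))) (2 ^ (y : ℕ)))) (G ⊔ edge x y) r := by
  refine ⟨h.rep.add hf.ne hG, h.enc.add16 h.rep hf.ne hG, sub_edge h.le hf, ?_⟩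
  have h1 : (Gf \ (G ⊔ edge x y)).edgeSet ⊂ (Gf \ G).edgeSet := by
    rw [SimpleGraph.edgeSet_ssubset_edgeSet]
    refine lt_of_le_of_ne (sdiff_le_sdiff_left le_sup_left) ?_
    intro h2
    have h3 : (Gf \ G).Adj x y := ⟨hf, hG⟩
    rw [← h2] at h3
    exact h3.2 (Or.inr ((edge_adj' hf.ne x y).mpr (Or.inl ⟨rfl, rfl⟩)))
  have := Set.ncard_lt_ncard h1 (Set.toFinite _)
  have := h.rem
  omega

lemma St.eq {Gf G : SimpleGraph (Fin 19)} {A c : ℕ} (h : St Gf A c G 0) : G = Gf := by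
  have h1 : (Gf \ G).edgeSet.ncard = 0 := Nat.le_zero.mp h.rem
  rw [Set.ncard_eq_zero (Set.toFinite _), SimpleGraph.edgeSet_eq_empty] at h1
  exact le_antisymm h.le (sdiff_eq_bot_iff.mp h1)

/-- `L` contains all missing edges. -/
def Cov (L : ℕ) (G Gf : SimpleGraph (Fin 19)) : Prop :=
  ∀ x y : Fin 19, x < y → Gf.Adj x y → ¬ G.Adj x y → L.testBit (152 * (x : ℕ) + (y : ℕ)) = true

lemma Cov.tagged {L : ℕ} {G Gf : SimpleGraph (Fin 19)} (h : Cov L G Gf) (A : ℕ) :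
    Cov (tagged A L) G Gf := by
  intro x y hxy h1 h2
  have e : Pan.tagged A L = L ||| (A &&& 1152921504606322688) := rfl
  rw [e, Nat.testBit_or, h x y hxy h1 h2]
  rfl

lemma Cov.filtAll {L A0 A c : ℕ} {G G0 Gf : SimpleGraph (Fin 19)} (hf : Pan2 Gf) (h : Cov L G Gf)
    (hc : Enc 16 c G) (hA : Rep 152 A G) (hA0 : Rep 152 A0 G0) (h0 : G0 ≤ G) (hle : G ≤ Gf) :
    Cov (filtAll A0 A c L 19) G Gf := by
  intro x y hxy h1 h2
  refine (filtAll_spec A0 A c L 19 le_rfl).2 x x.2 y ?_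
  rw [filtRow_eq]
  refine (filt_spec c _ (filt_spec c _ (MS_row L x)) y).mpr ⟨y.2, ?_⟩
  simp only [Finset.mem_filter, Finset.mem_univ, true_and]
  have hs := sub_edge hle h1
  exact ⟨⟨h x y hxy h1 h2, good_stale hf hc hA0 h0 h1.ne h2 hs⟩,
    good_stale hf hc hA le_rfl h1.ne h2 hs⟩

lemma above_bit (L k i : ℕ) (h : k < i) (hb : L.testBit i = true) :
    (above L (2 ^ k * 2)).testBit i = true := by
  have e : above L (2 ^ k * 2) = L / 2 ^ (k + 1) * 2 ^ (k + 1) := rfl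
  rw [e, mul_comm, Nat.testBit_two_pow_mul, ← Nat.shiftRight_eq_div_pow, Nat.testBit_shiftRight,
    Nat.add_sub_cancel' (by omega : k + 1 ≤ i), hb]
  simp; omega

/-- Existence of a remaining edge. -/
lemma St.ex {Gf G : SimpleGraph (Fin 19)} (hf : Pan2 Gf) {A c r : ℕ} (h : St Gf A c G r)
    (hc : c ≠ tgt) : ∃ x y : Fin 19, x < y ∧ Gf.Adj x y ∧ ¬ G.Adj x y ∧
      ∀ u v : Fin 19, u < v → Gf.Adj u v → ¬ G.Adj u v →
        152 * (x : ℕ) + (y : ℕ) ≤ 152 * (u : ℕ) + (v : ℕ) := by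
  classical
  let F : Finset (Fin 19 × Fin 19) :=
    Finset.univ.filter (fun p => p.1 < p.2 ∧ Gf.Adj p.1 p.2 ∧ ¬ G.Adj p.1 p.2)
  have hF : F.Nonempty := by
    by_contra hF
    apply hc
    have hG : G = Gf := by
      refine le_antisymm h.le ?_
      intro u v huv
      by_contra hn
      apply hF
      rcases lt_or_gt_of_ne huv.ne with h1 | h1
      · exact ⟨(u, v), by simp [F, h1, huv, hn]⟩
      · exact ⟨(v, u), by simp [F, h1, huv.symm]; exact fun h => hn h.symm⟩
    exact hf.tgt (hG ▸ h.enc)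
  obtain ⟨⟨x, y⟩, hm, hmin⟩ := Finset.exists_min_image F (fun p => 152 * (p.1 : ℕ) + (p.2 : ℕ)) hF
  simp only [F, Finset.mem_filter, Finset.mem_univ, true_and] at hm hmin
  exact ⟨x, y, hm.1, hm.2.1, hm.2.2, fun u v h1 h2 h3 => hmin (u, v) ⟨h1, h2, h3⟩⟩

lemma node_zero (iso : Nat → Bool) (A0 A c L : ℕ) :
    node iso 0 A0 A c L = if Nat.beq c tgt = true then false else nodeLast iso A0 A c L := by
  rw [← cif_eq]; rfl

lemma node_succ (iso : Nat → Bool) (n A0 A c L : ℕ) :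
    node iso (n + 1) A0 A c L = if Nat.beq c tgt = true then false else
      nodeMid (node iso n) A0 A c L := by
  rw [← cif_eq]; rfl

lemma nodeMid_eq (ih : Nat → Nat → Nat → Nat → Bool) (A0 A c L : Nat) :
    nodeMid ih A0 A c L = allBits (fun bx => allBits (fun bw =>
      nodeStep ih A c (tagged A (filtAll A0 A c L 19)) bx bw)
        (row (tagged A (filtAll A0 A c L 19)) bx)) full := rfl

lemma nodeStep_eq (ih : Nat → Nat → Nat → Nat → Bool) (A c L : Nat) (x y : Fin 19) :
    nodeStep ih A c L (2 ^ (x : ℕ)) (2 ^ (y : ℕ)) =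
      ih A (Nat.xor A (code (2 ^ (x : ℕ)) (2 ^ (y : ℕ))))
        (Nat.add c (ext (paths A (2 ^ (x : ℕ))) (2 ^ (y : ℕ))))
        (tagged (Nat.xor A (code (2 ^ (x : ℕ)) (2 ^ (y : ℕ))))
          (above L (2 ^ (152 * (x : ℕ) + (y : ℕ)) * 2))) := by
  rw [pow_add, mul_comm 152, pow_mul]; rfl

theorem node_sound {iso : ℕ → Bool} {Gf : SimpleGraph (Fin 19)} (hf : Pan2 Gf) :
    ∀ (n A0 A c L : ℕ) (G0 G : SimpleGraph (Fin 19)), St Gf A c G (n + 1) → Rep 152 A0 G0 → G0 ≤ G →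
      Cov L G Gf → node iso n A0 A c L = true → ∃ A', iso A' = true ∧ Rep 152 A' Gf := by
  intro n
  induction n with
  | zero =>
    intro A0 A c L G0 G hs hA0 h0 hL h
    rw [node_zero] at h
    split_ifs at h with hc
    obtain ⟨x, y, hxy, h1, h2, -⟩ := hs.ex hf (fun h => hc (nbeq.mpr h))
    have h3 := allBits_full h x
    have h4 := allBits_spec (MS_row L x) h3 (x := y) (by simp [hL x y hxy h1 h2])
    exact fin1_sound hf hs.enc hs.rep hA0 h0 h1.ne h2 (hs.add h2 h1).eq h4
  | succ n ih =>
    intro A0 A c L G0 G hs hA0 h0 hL h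
    rw [node_succ] at h
    split_ifs at h with hc
    rw [nodeMid_eq] at h
    obtain ⟨x, y, hxy, h1, h2, hmin⟩ := hs.ex hf (fun h => hc (nbeq.mpr h))
    have hL' := (hL.filtAll hf hs.enc hs.rep hA0 h0 hs.le).tagged A
    generalize tagged A (filtAll A0 A c L 19) = L' at h hL'
    have h3 := allBits_full h x
    have h4 := allBits_spec (MS_row L' x) h3 (x := y) (by simp [hL' x y hxy h1 h2])
    rw [nodeStep_eq] at h4
    refine ih _ _ _ _ G _ (hs.add h2 h1) hs.rep le_sup_left (Cov.tagged ?_ _) h4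
    intro u v huv h5 h6
    refine above_bit _ _ _ ?_ (hL' u v huv h5 (fun h => h6 (Or.inl h)))
    refine lt_of_le_of_ne (hmin u v huv h5 (fun h => h6 (Or.inl h))) ?_
    intro he
    obtain ⟨rfl, rfl⟩ := pos_inj (by norm_num) he
    exact h6 (Or.inr ((edge_adj' h1.ne _ _).mpr (Or.inl ⟨rfl, rfl⟩)))

end Pan
end

section
namespace Pan

/-- The standard Hamiltonian cycle. -/
abbrev H1 : SimpleGraph (Fin 19) := cycleGraph 19

open Classical in
/-- Degree. -/
noncomputable def dg (T : SimpleGraph (Fin 19)) (u : Fin 19) : ℕ :=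
  (Finset.univ.filter (fun w => T.Adj u w)).card

/-- Indicator. -/
def ind (u v : Fin 19) : ℕ := if u = v then 1 else 0

/-- Degree in a set of cycle edges. -/
def dR (R : Finset (Fin 19)) (u : Fin 19) : ℕ := (if u ∈ R then 1 else 0) + (if u - 1 ∈ R then 1 else 0)

open Classical in
/-- The cycle edges not contained in `E`. -/
noncomputable def RSet (E : SimpleGraph (Fin 19)) : Finset (Fin 19) :=
  Finset.univ.filter (fun i => ¬ E.Adj i (i + 1))

lemma dg_mono {T T' : SimpleGraph (Fin 19)} (h : T ≤ T') (u : Fin 19) : dg T u ≤ dg T' u := by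
  classical
  apply Finset.card_le_card
  intro w hw
  simp only [Finset.mem_filter, Finset.mem_univ, true_and] at hw ⊢
  exact h hw

lemma dg_lt_ex {T T' : SimpleGraph (Fin 19)} {u : Fin 19} (h : dg T u < dg T' u) :
    ∃ w, T'.Adj u w ∧ ¬ T.Adj u w := by
  classical
  by_contra hn
  push Not at hn
  refine absurd h (not_lt.mpr ?_)
  apply Finset.card_le_card
  intro w hw
  simp only [Finset.mem_filter, Finset.mem_univ, true_and] at hw ⊢
  exact hn w hw

lemma dg_add {T : SimpleGraph (Fin 19)} {x y : Fin 19} (hxy : x ≠ y) (hT : ¬ T.Adj x y) (u : Fin 19) :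
    dg (T ⊔ edge x y) u = dg T u + ind u x + ind u y := by
  classical
  have h1 : dg (T ⊔ edge x y) u =
      (Finset.univ.filter (fun w => T.Adj u w) ∪ Finset.univ.filter (fun w => (edge x y).Adj u w)).card := by
    unfold dg
    refine congrArg Finset.card ?_
    ext w; simp
  have h2 : Disjoint (Finset.univ.filter (fun w => T.Adj u w))
      (Finset.univ.filter (fun w => (edge x y).Adj u w)) := by
    rw [Finset.disjoint_left]
    intro w hw hw2
    simp only [Finset.mem_filter, Finset.mem_univ, true_and] at hw hw2
    rcases (edge_adj' hxy u w).mp hw2 with ⟨rfl, rfl⟩ | ⟨rfl, rfl⟩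
    · exact hT hw
    · exact hT hw.symm
  rw [h1, Finset.card_union_of_disjoint h2, add_assoc]
  unfold dg ind
  refine congrArg₂ (· + ·) (by congr) ?_
  simp only [edge_adj' hxy]
  by_cases hx : u = x
  · subst hx
    simp only [hxy, true_and, false_and, or_false, if_true, if_false, add_zero, Finset.card_eq_one]
    exact ⟨y, by ext; simp⟩
  · by_cases hy : u = y
    · subst hy
      simp only [hx, true_and, false_and, false_or, if_true, if_false, zero_add, Finset.card_eq_one]
      exact ⟨x, by ext; simp⟩
    · simp [hx, hy]

lemma dR_insert {R : Finset (Fin 19)} {x : Fin 19} (hx : x ∉ R) (u : Fin 19) :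
    dR (insert x R) u = dR R u + ind u x + ind u (x + 1) := by
  unfold dR ind
  have h1 : u - 1 = x ↔ u = x + 1 := sub_eq_iff_eq_add
  simp only [Finset.mem_insert, h1]
  by_cases h2 : u = x
  · subst h2
    have h3 : ¬ u = u + 1 := by simp
    simp only [hx, h3]; simp
    omega
  · by_cases h3 : u = x + 1
    · have h4 : u - 1 ∉ R := by rw [h1.mpr h3]; exact hx
      simp only [h2, h3.symm, h4]; simp
    · simp only [h2, h3]; simp

lemma RSet_lt {R R' : Finset (Fin 19)} {u : Fin 19} (h : dR R u < dR R' u) :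
    (u ∈ R' ∧ u ∉ R) ∨ (u - 1 ∈ R' ∧ u - 1 ∉ R) := by
  unfold dR at h
  by_contra hn
  push Not at hn
  refine absurd h (not_lt.mpr (Nat.add_le_add ?_ ?_))
  · split_ifs with h1 h2 <;> first | exact absurd (hn.1 h1) h2 | simp
  · split_ifs with h1 h2 <;> first | exact absurd (hn.2 h1) h2 | simp

lemma dR_mono_lt {R R' : Finset (Fin 19)} (hs : R ⊆ R') {u : Fin 19}
    (h : (u ∈ R' ∧ u ∉ R) ∨ (u - 1 ∈ R' ∧ u - 1 ∉ R)) : dR R u < dR R' u := by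
  unfold dR
  have h1 : (if u ∈ R then 1 else 0) ≤ (if u ∈ R' then 1 else 0) := by
    split_ifs with h1 h2 <;> first | exact absurd (hs h1) h2 | simp
  have h2 : (if u - 1 ∈ R then 1 else 0) ≤ (if u - 1 ∈ R' then 1 else 0) := by
    split_ifs with h1 h2 <;> first | exact absurd (hs h1) h2 | simp
  rcases h with ⟨h3, h4⟩ | ⟨h3, h4⟩
  · rw [if_neg h4, if_pos h3] at *; omega
  · rw [if_neg h4, if_pos h3] at *; omega

/-- Invariant after a cycle edge. -/
structure Inv (E G : SimpleGraph (Fin 19)) (R : Finset (Fin 19)) (m : ℕ) (s v : Fin 19) : Prop where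
  base : H1 ≤ G
  sub : G \ H1 ≤ E
  ms : MS m R
  rs : R ⊆ RSet E
  bal : ∀ u, dg (G \ H1) u + ind u v = dR R u + ind u s

/-- Invariant after a chord. -/
structure InvS (E G : SimpleGraph (Fin 19)) (R : Finset (Fin 19)) (m : ℕ) (s v : Fin 19) : Prop where
  base : H1 ≤ G
  sub : G \ H1 ≤ E
  ms : MS m R
  rs : R ⊆ RSet E
  bal : ∀ u, dg (G \ H1) u = dR R u + ind u s + ind u v

/-- Balance of the second Hamiltonian cycle. -/
def Bal (E : SimpleGraph (Fin 19)) : Prop := ∀ u, dg (E \ H1) u = dR (RSet E) u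

lemma sdiff_le_H {E G : SimpleGraph (Fin 19)} (h : G \ H1 ≤ E) : G \ H1 ≤ E \ H1 :=
  fun _ _ hu => ⟨h hu, hu.2⟩

lemma ind_self (u : Fin 19) : ind u u = 1 := if_pos rfl

lemma InvS.free {E G : SimpleGraph (Fin 19)} {R : Finset (Fin 19)} {m : ℕ} {s v : Fin 19}
    (hb : Bal E) (h : InvS E G R m s v) :
    (v ∈ RSet E ∧ v ∉ R) ∨ (v - 1 ∈ RSet E ∧ v - 1 ∉ R) := by
  apply RSet_lt
  have h1 := dg_mono (sdiff_le_H h.sub) v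
  rw [hb v, h.bal v, ind_self] at h1
  omega

lemma InvS.ins {E G : SimpleGraph (Fin 19)} {R : Finset (Fin 19)} {m : ℕ} {s v x v' : Fin 19}
    (h : InvS E G R m s v) (hx : x ∈ RSet E) (hxR : x ∉ R)
    (hv : (v = x ∧ v' = x + 1) ∨ (v = x + 1 ∧ v' = x)) :
    Inv E G (insert x R) (Nat.add m (2 ^ (x : ℕ))) s v' := by
  refine ⟨h.base, h.sub, ?_, ?_, ?_⟩
  · rw [Nat.add_eq, add_comm]; exact h.ms.add hxR
  · exact Finset.insert_subset hx h.rs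
  · intro u
    rw [h.bal u, dR_insert hxR]
    rcases hv with ⟨rfl, rfl⟩ | ⟨rfl, rfl⟩ <;> omega

lemma InvS.last {E G : SimpleGraph (Fin 19)} {R : Finset (Fin 19)} {m : ℕ} {s v : Fin 19}
    (hb : Bal E) (h : InvS E G R m s v) (hE : E ≤ G) : v = s + 1 ∨ v = s - 1 := by
  have hS : E \ H1 = G \ H1 :=
    le_antisymm (fun _ _ hu => ⟨hE hu.1, hu.2⟩) (sdiff_le_H h.sub)
  have key : ∀ u, dR R u < dR (RSet E) u → u = s ∨ u = v := by
    intro u hu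
    rw [← hb u, hS, h.bal u] at hu
    unfold ind at hu
    by_contra hn
    push Not at hn
    simp [hn.1, hn.2] at hu
  rcases h.free hb with h1 | h1
  · right
    rcases key (v + 1) (dR_mono_lt h.rs (Or.inr (by simpa using h1))) with h2 | h2
    · rw [← h2]; simp
    · simp at h2
  · left
    rcases key (v - 1) (dR_mono_lt h.rs (Or.inl h1)) with h2 | h2
    · rw [← h2]; simp
    · simp at h2

lemma sup_sdiff' {G : SimpleGraph (Fin 19)} {v w : Fin 19} (hvw : v ≠ w) (hH : ¬ H1.Adj v w) :
    (G ⊔ edge v w) \ H1 = (G \ H1) ⊔ edge v w := by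
  rw [sup_sdiff]
  refine congrArg₂ (· ⊔ ·) rfl ?_
  refine le_antisymm sdiff_le ?_
  intro a b hab
  refine ⟨hab, ?_⟩
  rcases (edge_adj' hvw a b).mp hab with ⟨rfl, rfl⟩ | ⟨rfl, rfl⟩
  · exact hH
  · exact fun h => hH h.symm

lemma Inv.add {E G : SimpleGraph (Fin 19)} {R : Finset (Fin 19)} {m : ℕ} {s v w : Fin 19}
    (h : Inv E G R m s v) (hE : (E \ H1).Adj v w) (hG : ¬ G.Adj v w) :
    InvS E (G ⊔ edge v w) R m s w := by
  have e := sup_sdiff' (G := G) hE.ne hE.2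
  refine ⟨h.base.trans le_sup_left, ?_, h.ms, h.rs, ?_⟩
  · rw [e]; exact sub_edge h.sub hE.1
  · intro u
    rw [e, dg_add hE.ne (fun h3 : (G \ H1).Adj v w => hG h3.1), h.bal u]

lemma Inv.ex {E G : SimpleGraph (Fin 19)} {R : Finset (Fin 19)} {m : ℕ} {s v : Fin 19}
    (hb : Bal E) (h : Inv E G R m s v) (hvs : v ≠ s) : ∃ w, (E \ H1).Adj v w ∧ ¬ G.Adj v w := by
  have h1 : dg (G \ H1) v < dg (E \ H1) v := by
    have h2 := h.bal v
    have h3 : dR R v ≤ dR (RSet E) v := by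
      have hs := h.rs
      unfold dR
      refine Nat.add_le_add ?_ ?_
      · split_ifs with h1 h2 <;> first | exact absurd (hs h1) h2 | simp
      · split_ifs with h1 h2 <;> first | exact absurd (hs h1) h2 | simp
    rw [ind_self, ind, if_neg hvs] at h2
    rw [hb v]
    omega
  obtain ⟨w, h2, h3⟩ := dg_lt_ex h1
  exact ⟨w, h2, fun h4 => h3 ⟨h4, h2.2⟩⟩

/-! ### Bit lemmas -/

lemma nxt_pow : ∀ v : Fin 19, nxt (2 ^ (v : ℕ)) = 2 ^ ((v + 1 : Fin 19) : ℕ) := by decide +kernel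
lemma prv_pow : ∀ v : Fin 19, prv (2 ^ (v : ℕ)) = 2 ^ ((v - 1 : Fin 19) : ℕ) := by decide +kernel
lemma up_bit : ∀ x w : Fin 19, x < w →
    (Nat.sub 524288 (Nat.mul (2 ^ (x : ℕ)) 2)).testBit w = true := by decide +kernel
lemma np_bit : ∀ s : Fin 19, (Nat.add (nxt (2 ^ (s : ℕ))) (prv (2 ^ (s : ℕ)))).testBit (s + 1 : Fin 19) = true ∧
    (Nat.add (nxt (2 ^ (s : ℕ))) (prv (2 ^ (s : ℕ)))).testBit (s - 1 : Fin 19) = true := by decide +kernel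

lemma MS_lt {m : ℕ} (h : m < 2 ^ 19) :
    MS m (Finset.univ.filter (fun w : Fin 19 => m.testBit w = true)) := by
  intro i
  simp only [Finset.mem_filter, Finset.mem_univ, true_and]
  constructor
  · intro hi
    refine ⟨?_, hi⟩
    by_contra hn
    rw [Nat.testBit_lt_two_pow (h.trans_le (Nat.pow_le_pow_right (by norm_num) (by omega)))] at hi
    exact absurd hi (by simp)
  · rintro ⟨_, hi⟩; exact hi

lemma allBits_lt {body : Nat → Bool} {m : ℕ} (hm : m < 2 ^ 19) (h : allBits body m = true) {x : Fin 19}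
    (hx : m.testBit x = true) : body (2 ^ (x : ℕ)) = true :=
  allBits_spec (MS_lt hm) h (by simp [hx])

lemma cand_lt (lm A : ℕ) (x : Fin 19) : cand lm A (2 ^ (x : ℕ)) < 2 ^ 19 := by
  have e : cand lm A (2 ^ (x : ℕ)) = row lm (2 ^ (x : ℕ)) &&& (row A (2 ^ (x : ℕ)) ^^^ full) := by
    rw [cand]; rfl
  rw [e]
  exact lt_of_le_of_lt Nat.and_le_left (MS_row lm x).lt

lemma cand_bit {lm A : ℕ} {x w : Fin 19} (h1 : lm.testBit (152 * (x : ℕ) + w) = true)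
    (h2 : ¬ A.testBit (152 * (x : ℕ) + w) = true) : (cand lm A (2 ^ (x : ℕ))).testBit w = true := by
  have e : cand lm A (2 ^ (x : ℕ)) = row lm (2 ^ (x : ℕ)) &&& (row A (2 ^ (x : ℕ)) ^^^ full) := by
    rw [cand]; rfl
  rw [e, Nat.testBit_and, Nat.testBit_xor]
  have h3 : (row lm (2 ^ (x : ℕ))).testBit w = true := (MS_row lm x w).mpr ⟨w.2, by simp [h1]⟩
  have h4 : (row A (2 ^ (x : ℕ))).testBit w = false := by
    rw [Bool.eq_false_iff]
    intro h
    obtain ⟨_, h5⟩ := (MS_row A x w).mp h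
    simp only [Finset.mem_filter, Finset.mem_univ, true_and] at h5
    exact h2 h5
  have h5 : full.testBit w = true := (MS_full w).mpr ⟨w.2, Finset.mem_univ _⟩
  rw [h3, h4, h5]; rfl

lemma Enc.div {c : ℕ} {G : SimpleGraph (Fin 19)} (h : Enc 16 c G) (hle : ∀ i, i < 18 → cd G i ≤ 2) :
    Nat.div c 295147905179352825856 = cd G 17 := by
  unfold Enc at h
  rw [Finset.sum_range_succ] at h
  have h1 : ∑ i ∈ Finset.range 17, 16 ^ i * cd G i < 16 ^ 17 := by
    calc ∑ i ∈ Finset.range 17, 16 ^ i * cd G i ≤ ∑ i ∈ Finset.range 17, 16 ^ i * 2 :=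
          Finset.sum_le_sum (fun i hi => Nat.mul_le_mul_left _ (hle i (by
            have := Finset.mem_range.mp hi; omega)))
      _ < 16 ^ 17 := by decide +kernel
  change c / 295147905179352825856 = _
  rw [h, show 295147905179352825856 = 16 ^ 17 by norm_num,
    Nat.add_mul_div_left _ _ (by positivity), Nat.div_eq_of_lt h1, zero_add]

/-! ### Trail search -/

/-- Fixed data of the trail search. -/
structure Ctx (Gf E : SimpleGraph (Fin 19)) (h1 lm all : ℕ) : Prop where
  pan : Pan2 Gf
  le : E ≤ Gf
  bal : Bal E
  two : ∀ G, H1 ≤ G → E ≤ G → 2 ≤ cycleCount G 19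
  lmc : ∀ x w : Fin 19, (E \ H1).Adj x w → lm.testBit (152 * (x : ℕ) + w) = true
  rep : Rep 152 h1 H1
  allc : ∀ x y : Fin 19, x < y → all.testBit (152 * (x : ℕ) + y) = true

variable {Gf E : SimpleGraph (Fin 19)} {h1 lm all : ℕ} {iso : ℕ → Bool}

lemma startL_cov (hx : Ctx Gf E h1 lm all) {A : ℕ} {G : SimpleGraph (Fin 19)} (hA : Rep 152 A G) :
    Cov (startL all A) G Gf := by
  apply Cov.tagged
  intro x y hxy _ h2
  have e : Nat.xor all (Nat.land all A) = all ^^^ (all &&& A) := rfl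
  have h3 : A.testBit (152 * (x : ℕ) + y) = false := by
    rw [Bool.eq_false_iff, Ne, hA x y]; exact h2
  rw [e, Nat.testBit_xor, Nat.testBit_and, hx.allc x y hxy, h3]
  rfl

/-- Specification of the chord branching. -/
def NeedSpec (Gf E : SimpleGraph (Fin 19)) (iso : ℕ → Bool)
    (need : Nat → Nat → Nat → Nat → Nat → Nat → Bool) (r : ℕ) : Prop :=
  ∀ (A c m : ℕ) (G : SimpleGraph (Fin 19)) (R : Finset (Fin 19)) (s v w : Fin 19) (M : ℕ),
    St Gf A c G r → Inv E G R m s v → (E \ H1).Adj v w → ¬ G.Adj v w → M < 2 ^ 19 →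
    M.testBit w = true → need A c m (2 ^ (s : ℕ)) (2 ^ (v : ℕ)) M = true →
    ∃ A', iso A' = true ∧ Rep 152 A' Gf

lemma afterR_sound (hx : Ctx Gf E h1 lm all) {nd : Nat → Nat → Bool}
    {need : Nat → Nat → Nat → Nat → Nat → Nat → Bool} {r : ℕ} (hneed : NeedSpec Gf E iso need r)
    {A c m : ℕ} {G : SimpleGraph (Fin 19)} {R : Finset (Fin 19)} {s v : Fin 19}
    (hs : St Gf A c G r) (hi : Inv E G R m s v)
    (hnd : nd A c = true → ∃ A', iso A' = true ∧ Rep 152 A' Gf)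
    (h : afterR lm nd need A c m (2 ^ (s : ℕ)) (2 ^ (v : ℕ)) = true) :
    ∃ A', iso A' = true ∧ Rep 152 A' Gf := by
  rw [afterR, cif_eq] at h
  by_cases hvs : v = s
  · rw [if_pos (by rw [hvs]; exact nbeq.mpr rfl), cif_eq] at h
    by_cases hc : Nat.beq (Nat.div c 295147905179352825856) 2 = true
    · rw [if_pos hc] at h
      exact hnd h
    · rw [if_neg hc] at h
      have hcd := hs.enc.div (fun i hi => (cd_mono hs.le i).trans (hx.pan.cd_le hi))
      have hex : ∃ x w : Fin 19, x < w ∧ (E \ H1).Adj x w ∧ ¬ G.Adj x w := by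
        by_contra hn
        push Not at hn
        have hEG : E ≤ G := by
          intro a b hab
          by_contra hG
          have hab' : (E \ H1).Adj a b := ⟨hab, fun h => hG (hi.base h)⟩
          rcases lt_or_gt_of_ne hab.ne with hl | hl
          · exact hG (hn a b hl hab')
          · exact hG (hn b a hl hab'.symm).symm
        have h2 := hx.two G hi.base hEG
        have h3 : cycleCount Gf 19 = 2 := hx.pan 17 (by norm_num) (by norm_num)
        have h4 : cycleCount G 19 ≤ cycleCount Gf 19 := cycleCount_mono hs.le 17
        have h5 : cd G 17 = cycleCount G 19 := rfl
        apply hc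
        rw [nbeq, hcd, h5]
        omega
      obtain ⟨x, w, hxw, hE, hG⟩ := hex
      have h2 := allBits_full h x
      rw [force_eq] at h2
      have hi' : Inv E G R m x x := ⟨hi.base, hi.sub, hi.ms, hi.rs, fun u => by
        have := hi.bal u; rw [hvs] at this; omega⟩
      have hA : ¬ A.testBit (152 * (x : ℕ) + w) = true := by rw [hs.rep x w]; exact hG
      refine hneed A c m G R x x w _ hs hi' hE hG ?_ ?_ h2
      · exact lt_of_le_of_lt Nat.and_le_left (cand_lt lm A x)
      · exact (Nat.testBit_and _ _ _).trans
          (by rw [cand_bit (hx.lmc x w hE) hA, up_bit x w hxw]; rfl)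
  · rw [if_neg, force_eq] at h
    · obtain ⟨w, hE, hG⟩ := hi.ex hx.bal hvs
      have hA : ¬ A.testBit (152 * (v : ℕ) + w) = true := by rw [hs.rep v w]; exact hG
      exact hneed A c m G R s v w _ hs hi hE hG (cand_lt lm A v) (cand_bit (hx.lmc v w hE) hA) h
    · rw [nbeq]
      intro h2
      exact hvs (Fin.ext (Nat.pow_right_injective le_rfl h2))

lemma land_zero {R : Finset (Fin 19)} {m : ℕ} (hm : MS m R) {x : Fin 19} (hx : x ∉ R) :
    Nat.beq (Nat.land m (2 ^ (x : ℕ))) 0 = true := by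
  rw [nbeq]
  have e : Nat.land m (2 ^ (x : ℕ)) = m &&& 2 ^ (x : ℕ) := rfl
  rw [e]
  apply Nat.eq_of_testBit_eq
  intro i
  rw [Nat.testBit_and, Nat.testBit_two_pow, Nat.zero_testBit]
  by_cases h : (x : ℕ) = i
  · have h1 : m.testBit i = false := by
      rw [Bool.eq_false_iff]
      intro h2
      obtain ⟨h3, h4⟩ := (hm i).mp h2
      apply hx
      have : x = ⟨i, h3⟩ := Fin.ext h
      rw [this]; exact h4
    simp [h1]
  · simp [h]

lemma stepRG_sound {aft : Nat → Nat → Nat → Nat → Nat → Bool} (hb : Bal E) {A c m : ℕ}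
    {G : SimpleGraph (Fin 19)} {R : Finset (Fin 19)} {s v : Fin 19} (hi : InvS E G R m s v)
    (h : stepRG aft A c m (2 ^ (s : ℕ)) (2 ^ (v : ℕ)) = true) :
    ∃ (R' : Finset (Fin 19)) (m' : ℕ) (v' : Fin 19), Inv E G R' m' s v' ∧
      aft A c m' (2 ^ (s : ℕ)) (2 ^ (v' : ℕ)) = true := by
  rw [stepRG, force_eq, force_eq, cif_eq, nxt_pow, prv_pow] at h
  split_ifs at h with h2
  rcases hi.free hb with ⟨h3, h4⟩ | ⟨h3, h4⟩
  · rw [optR, cif_eq, if_pos (land_zero hi.ms h4), force_eq] at h2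
    exact ⟨_, _, _, hi.ins h3 h4 (Or.inl ⟨rfl, rfl⟩), h2⟩
  · rw [optR, cif_eq, if_pos (land_zero hi.ms h4), force_eq] at h
    exact ⟨_, _, _, hi.ins h3 h4 (Or.inr ⟨by simp, rfl⟩), h⟩

lemma stepR_zero (iso : ℕ → Bool) (h1 lm all : ℕ) : stepR iso h1 lm all 0 =
    stepRG (afterR lm
      (fun A c => force (startL all A) (fun L => node iso (nat_lit 0) h1 A c L))
      (fun A c _ bs bu M => needS1 iso h1 A c bs bu M)) := rfl

lemma stepR_succ (iso : ℕ → Bool) (h1 lm all n : ℕ) : stepR iso h1 lm all (n + 1) =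
    stepRG (afterR lm
      (fun A c => force (startL all A) (fun L => node iso (Nat.succ n) h1 A c L))
      (needS (stepR iso h1 lm all n))) := rfl

theorem stepR_sound (hx : Ctx Gf E h1 lm all) : ∀ (n A c m : ℕ) (G : SimpleGraph (Fin 19))
    (R : Finset (Fin 19)) (s v : Fin 19), St Gf A c G (n + 1) → InvS E G R m s v →
    stepR iso h1 lm all n A c m (2 ^ (s : ℕ)) (2 ^ (v : ℕ)) = true →
    ∃ A', iso A' = true ∧ Rep 152 A' Gf := by
  intro n
  induction n with
  | zero =>
    intro A c m G R s v hs hi h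
    rw [stepR_zero] at h
    obtain ⟨R', m', v', hi', h'⟩ := stepRG_sound hx.bal hi h
    refine afterR_sound hx ?_ hs hi' ?_ h'
    · intro A c m G R s v w M hs hi hE hG hM hw h
      have hf : Gf.Adj v w := hx.le hE.1
      have heq := (hs.add hG hf).eq
      have hl := (hi.add hE hG).last hx.bal (by rw [heq]; exact hx.le)
      have hb : (Nat.land M (Nat.add (nxt (2 ^ (s : ℕ))) (prv (2 ^ (s : ℕ))))).testBit w = true := by
        refine (Nat.testBit_and _ _ _).trans ?_
        rw [hw]
        rcases hl with rfl | rfl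
        · rw [(np_bit s).1]; rfl
        · rw [(np_bit s).2]; rfl
      have h2 := allBits_lt (lt_of_le_of_lt Nat.and_le_left hM) h hb
      exact fin1_sound hx.pan hs.enc hs.rep hx.rep hi.base hE.ne hG heq h2
    · intro h
      rw [force_eq] at h
      exact node_sound hx.pan 0 _ _ _ _ H1 G hs hx.rep hi.base (startL_cov hx hs.rep) h
  | succ n ih =>
    intro A c m G R s v hs hi h
    rw [stepR_succ] at h
    obtain ⟨R', m', v', hi', h'⟩ := stepRG_sound hx.bal hi h
    refine afterR_sound hx ?_ hs hi' ?_ h'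
    · intro A c m G R s v w M hs hi hE hG hM hw h
      have hf : Gf.Adj v w := hx.le hE.1
      have h2 := allBits_lt hM h hw
      have h3 : good (Nat.add c (ext (paths A (2 ^ (v : ℕ))) (2 ^ (w : ℕ)))) = true :=
        good_stale hx.pan hs.enc hs.rep le_rfl hE.ne hG (sub_edge hs.le hf)
      rw [force_eq, cif_eq, if_pos h3, force_eq] at h2
      exact ih _ _ _ _ R s w (hs.add hG hf) (hi.add hE hG) h2
    · intro h
      rw [force_eq] at h
      exact node_sound hx.pan (n + 1) _ _ _ _ H1 G hs hx.rep hi.base (startL_cov hx hs.rep) h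

end Pan
end

section
namespace Pan

lemma H1_adj (u w : Fin 19) : H1.Adj u w ↔ u - w = 1 ∨ w - u = 1 := cycleGraph_adj

lemma h1N_bit : ∀ x y : Fin 19, h1N.testBit (152 * (x : ℕ) + (y : ℕ)) =
    decide (x - y = 1 ∨ y - x = 1) := by decide +kernel

lemma h1N_rep : Rep 152 h1N H1 := by
  intro x y
  rw [h1N_bit, H1_adj, decide_eq_true_iff]

lemma bigh_bit : ∀ x y : Fin 19, (big hl).1.testBit (2000 * (x : ℕ) + (y : ℕ)) =
    decide (x - y = 1 ∨ y - x = 1) := by decide +kernel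

lemma bigh_rep : Rep 2000 (big hl).1 H1 := by
  intro x y
  rw [bigh_bit, H1_adj, decide_eq_true_iff]

lemma lg_hl : lg hl = H1 :=
  (big_spec hl (by rw [big_h])).1.unique bigh_rep

lemma H1_cd {i : ℕ} (hi : i < 18) : cd H1 i = if i = 17 then 1 else 0 := by
  have h := (big_spec hl (by rw [big_h])).2
  rw [lg_hl, big_h] at h
  refine h.inj (fun i => if i = 17 then 1 else 0) ?_ ?_ hi
  · intro i _
    split_ifs <;> norm_num
  · decide +kernel

lemma H1_enc : Enc 16 295147905179352825856 H1 := by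
  unfold Enc
  have h : ∑ i ∈ Finset.range 18, 16 ^ i * cd H1 i = ∑ i ∈ Finset.range 18, 16 ^ i * (if i = 17 then 1 else 0) := by
    apply Finset.sum_congr rfl
    intro i hi
    rw [H1_cd (Finset.mem_range.mp hi)]
  rw [h]
  decide +kernel

lemma allN_bit : ∀ x y : Fin 19, x < y → allN.testBit (152 * (x : ℕ) + (y : ℕ)) = true := by
  decide +kernel

/-- Circular length. -/
def cl (x w : Fin 19) : ℕ := min ((w - x : Fin 19) : ℕ) ((x - w : Fin 19) : ℕ)

lemma lmN_bit : ∀ a : Fin 19, 2 ≤ (a : ℕ) → (a : ℕ) ≤ 9 → ∀ x w : Fin 19, 2 ≤ cl x w → cl x w ≤ a →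
    ¬ (x = 18 ∧ w = 18 + a) → ¬ (w = 18 ∧ x = 18 + a) →
    (lmN a).testBit (152 * (x : ℕ) + (w : ℕ)) = true := by
  decide +kernel

lemma cl_bound : ∀ x w : Fin 19, x ≠ w → ¬ (x - w = 1 ∨ w - x = 1) → 2 ≤ cl x w ∧ cl x w ≤ 9 := by
  decide +kernel

/-! ### Second Hamiltonian cycle -/

lemma succ_ne_pred : ∀ i : Fin 19, i + 1 ≠ i - 1 := by decide

lemma dbl_ne : ∀ a : Fin 19, a ≠ 0 → a + a ≠ 0 := by decide

lemma nbr_E {G E : SimpleGraph (Fin 19)} (hE : E ∈ CS G 19) (u : Fin 19) :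
    ∃ a b : Fin 19, a ≠ b ∧ ∀ w, E.Adj u w ↔ w = a ∨ w = b := by
  obtain ⟨_, p, rfl⟩ := hE
  have hs : Function.Surjective p := Finite.surjective_of_injective p.injective
  obtain ⟨i, rfl⟩ := hs u
  refine ⟨p (i + 1), p (i - 1), ?_, ?_⟩
  · intro h
    exact succ_ne_pred i (p.injective h)
  · intro w
    obtain ⟨j, rfl⟩ := hs w
    rw [map_adj_apply, cycleGraph_adj, p.injective.eq_iff, p.injective.eq_iff]
    constructor
    · rintro (h | h)
      · right; rw [← h]; simp
      · left; rw [← h]; simp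
    · rintro (rfl | rfl)
      · right; simp
      · left; simp

lemma H1_mem {G : SimpleGraph (Fin 19)} (h : H1 ≤ G) : H1 ∈ CS G 19 :=
  ⟨h, Function.Embedding.refl _, (SimpleGraph.map_id _).symm⟩

lemma E_bal {G E : SimpleGraph (Fin 19)} (hE : E ∈ CS G 19) : Bal E := by
  classical
  intro u
  obtain ⟨a, b, hab, h⟩ := nbr_E hE u
  have h1 : dg (E \ H1) u = (({a, b} : Finset (Fin 19)).filter (fun w => ¬ H1.Adj u w)).card := by
    unfold dg
    refine congrArg Finset.card ?_
    ext w
    simp [h w]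
  have hH : ∀ w, H1.Adj u w ↔ w = u + 1 ∨ w = u - 1 := by
    intro w
    rw [H1_adj]
    constructor
    · rintro (h | h)
      · right; rw [← h]; simp
      · left; rw [← h]; simp
    · rintro (rfl | rfl)
      · right; simp
      · left; simp
  have h2 : (({a, b} : Finset (Fin 19)).filter (fun w => H1.Adj u w)) =
      (({u + 1, u - 1} : Finset (Fin 19)).filter (fun w => E.Adj u w)) := by
    ext w
    simp only [Finset.mem_filter, Finset.mem_insert, Finset.mem_singleton, hH, h]
    exact and_comm
  have h3 := Finset.card_filter_add_card_filter_not (s := ({a, b} : Finset (Fin 19))) (fun w => H1.Adj u w)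
  rw [Finset.card_pair hab, h2] at h3
  have hne : u + 1 ≠ u - 1 := succ_ne_pred u
  have h4 : (({u + 1, u - 1} : Finset (Fin 19)).filter (fun w => E.Adj u w)).card =
      (if E.Adj u (u + 1) then 1 else 0) + (if E.Adj u (u - 1) then 1 else 0) := by
    rw [Finset.filter_insert, Finset.filter_singleton]
    by_cases h5 : E.Adj u (u + 1) <;> by_cases h6 : E.Adj u (u - 1) <;> simp [h5, h6, hne]
  have h5 : dR (RSet E) u = (if E.Adj u (u + 1) then 0 else 1) + (if E.Adj u (u - 1) then 0 else 1) := by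
    unfold dR RSet
    simp only [Finset.mem_filter, Finset.mem_univ, true_and, sub_add_cancel]
    have h6 : E.Adj (u - 1) u ↔ E.Adj u (u - 1) := E.adj_comm _ _
    simp only [h6]
    by_cases h5 : E.Adj u (u + 1) <;> by_cases h6 : E.Adj u (u - 1) <;> simp [h5, h6]
  rw [h4] at h3
  rw [h1, h5]
  by_cases h5 : E.Adj u (u + 1) <;> by_cases h6 : E.Adj u (u - 1) <;> simp [h5, h6] at h3 ⊢ <;> omega

lemma E_two {Gf E : SimpleGraph (Fin 19)} (hE : E ∈ CS Gf 19) (hne : E ≠ H1) (G : SimpleGraph (Fin 19))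
    (h1 : H1 ≤ G) (h2 : E ≤ G) : 2 ≤ cycleCount G 19 := by
  rw [cycleCount_eq G 17]
  have h := Set.ncard_pair hne.symm
  have h3 : ({H1, E} : Set (SimpleGraph (Fin 19))).ncard ≤ (CS G (17 + 2)).ncard := by
    apply Set.ncard_le_ncard _ (Set.toFinite _)
    intro C hC
    rcases hC with hC | hC
    · rw [hC]; exact H1_mem h1
    · rw [hC]; exact ⟨h2, hE.2⟩
  omega

lemma E_ex {Gf E : SimpleGraph (Fin 19)} (hE : E ∈ CS Gf 19) (hne : E ≠ H1) :
    ∃ x w, (E \ H1).Adj x w := by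
  by_contra hn
  push Not at hn
  apply hne
  have hle : E ≤ H1 := by
    intro a b hab
    by_contra h
    exact hn a b ⟨hab, h⟩
  refine le_antisymm hle ?_
  intro u w huw
  obtain ⟨a, b, hab, h⟩ := nbr_E hE u
  obtain ⟨a', b', hab', h'⟩ := nbr_E (H1_mem le_rfl) u
  have ha := (h' a).mp (hle ((h a).mpr (Or.inl rfl)))
  have hb := (h' b).mp (hle ((h b).mpr (Or.inr rfl)))
  have hw := (h' w).mp huw
  rw [h w]
  rcases ha with rfl | rfl <;> rcases hb with rfl | rfl <;> rcases hw with rfl | rfl <;> simp_all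

lemma many {T : SimpleGraph (Fin 19)} {a : Fin 19} (ha : a ≠ 0) (h : ∀ x, T.Adj x (x + a)) :
    19 ≤ T.edgeSet.ncard := by
  have hi : Function.Injective (fun x : Fin 19 => s(x, x + a)) := by
    intro x y hxy
    simp only [Sym2.eq_iff] at hxy
    rcases hxy with h1 | ⟨h1, h2⟩
    · exact h1.1
    · exfalso
      have h3 : a + a = 0 := by
        rw [h1, add_assoc] at h2
        simpa using h2
      exact dbl_ne a ha h3
  have h1 : (Set.range (fun x : Fin 19 => s(x, x + a))).ncard = 19 := by
    rw [← Set.image_univ, Set.ncard_image_of_injective _ hi, Set.ncard_univ]; simp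
  have h2 : (Set.range (fun x : Fin 19 => s(x, x + a))).ncard ≤ T.edgeSet.ncard := by
    apply Set.ncard_le_ncard _ (Set.toFinite _)
    rintro _ ⟨x, rfl⟩
    exact h x
  omega

lemma rem5 {Gf : SimpleGraph (Fin 19)} (h : H1 ≤ Gf) (hc : Gf.edgeSet.ncard ≤ 24) :
    (Gf \ H1).edgeSet.ncard ≤ 5 := by
  have h1 : 19 ≤ H1.edgeSet.ncard := many (a := 1) (by decide) (fun x => cyc_adj_succ x)
  have h2 := Set.ncard_sdiff (SimpleGraph.edgeSet_subset_edgeSet.mpr h) (Set.toFinite _)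
  rw [SimpleGraph.edgeSet_sdiff, h2]
  omega

/-! ### The root -/

lemma rootCheck_eq (a : ℕ) : rootCheck a =
    stepR isoT h1N (lmN a) allN 3 (Nat.xor h1N (code 1 (2 ^ a)))
      (Nat.add 295147905179352825856 (ext (paths h1N 1) (2 ^ a))) 0 1 (2 ^ a) := by
  rw [rootCheck, force_eq, force_eq, force_eq, force_eq, force_eq, force_eq]
  rfl

theorem core {Gf E : SimpleGraph (Fin 19)} (hf : Pan2 Gf) (hH : H1 ≤ Gf) (hc : Gf.edgeSet.ncard ≤ 24)
    (hE : E ∈ CS Gf 19) (hne : E ≠ H1) {a : Fin 19} (ha2 : 2 ≤ (a : ℕ)) (ha9 : (a : ℕ) ≤ 9)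
    (hmax : ∀ x w, (E \ H1).Adj x w → cl x w ≤ a) (h0 : (E \ H1).Adj 0 (0 + a))
    (h18 : ¬ (E \ H1).Adj 18 (18 + a)) (hroot : rootCheck a = true) :
    ∃ A', isoT A' = true ∧ Rep 152 A' Gf := by
  rw [zero_add] at h0
  have hx : Ctx Gf E h1N (lmN a) allN := by
    refine ⟨hf, hE.1, E_bal hE, E_two hE hne, ?_, h1N_rep, allN_bit⟩
    intro x w hxw
    have hb := cl_bound x w hxw.ne (fun h => hxw.2 ((H1_adj x w).mpr h))
    refine lmN_bit a ha2 ha9 x w hb.1 (hmax x w hxw) ?_ ?_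
    · rintro ⟨rfl, rfl⟩; exact h18 hxw
    · rintro ⟨rfl, rfl⟩; exact h18 hxw.symm
  have hs : St Gf h1N 295147905179352825856 H1 5 := ⟨h1N_rep, H1_enc, hH, rem5 hH hc⟩
  have hs' := hs.add h0.2 (hE.1 h0.1)
  rw [rootCheck_eq] at hroot
  refine stepR_sound hx 3 _ _ _ _ ∅ 0 a hs' ?_ hroot
  have e := sup_sdiff' (G := H1) h0.ne h0.2
  refine ⟨le_sup_left, ?_, ?_, Finset.empty_subset _, ?_⟩
  · rw [e, sdiff_self]
    exact sub_edge bot_le h0.1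
  · intro i; simp
  · intro u
    rw [e, sdiff_self, dg_add h0.ne (by exact fun h => h)]
    have h1 : dg ⊥ u = 0 := by simp [dg]
    have h2 : dR ∅ u = 0 := by simp [dR]
    rw [h1, h2]

end Pan
end

section
namespace Pan

/-! ### Transport along bijections -/

lemma CS_comap {V V' : Type*} (e : V' ≃ V) {G C : SimpleGraph V} {k : ℕ} (h : C ∈ CS G k) :
    C.comap e ∈ CS (G.comap e) k := by
  obtain ⟨hle, p, rfl⟩ := h
  refine ⟨fun a b hab => hle hab, p.trans e.symm.toEmbedding, ?_⟩
  ext a b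
  simp only [SimpleGraph.comap_adj, SimpleGraph.map_adj, Function.Embedding.trans_apply,
    Equiv.coe_toEmbedding, Equiv.symm_apply_eq]

lemma comap_inj {V V' : Type*} (e : V' ≃ V) {G C : SimpleGraph V} (h : G.comap e = C.comap e) : G = C := by
  ext a b
  have h1 : (G.comap e).Adj (e.symm a) (e.symm b) ↔ (C.comap e).Adj (e.symm a) (e.symm b) := by rw [h]
  simpa using h1

lemma comap_sdiff {V V' : Type*} (e : V' ≃ V) (G C : SimpleGraph V) :
    (G \ C).comap e = G.comap e \ C.comap e := by
  ext a b
  simp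

lemma ncard_iso {V V' : Type*} {G : SimpleGraph V} {G' : SimpleGraph V'} (e : G ≃g G') :
    G.edgeSet.ncard = G'.edgeSet.ncard :=
  Nat.card_congr e.mapEdgeSet

lemma Pan2.iso {V : Type*} [Finite V] {G : SimpleGraph V} {G' : SimpleGraph (Fin 19)} (e : G' ≃g G)
    (h : ∀ i, 1 ≤ i → i < 18 → cycleCount G (i + 2) = 2) : Pan2 G' := by
  intro i h1 h2
  rw [cycleCount_iso e i, h i h1 h2]

lemma H1_rot (x : Fin 19) : H1.comap (Equiv.addLeft x) = H1 := by
  ext a b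
  exact (rotA 17 x).map_adj_iff

lemma cl_rot (x a b : Fin 19) : cl (x + a) (x + b) = cl a b := by
  unfold cl
  rw [add_sub_add_left_eq_sub, add_sub_add_left_eq_sub]

lemma cl_cases : ∀ x w : Fin 19, w = x + Fin.ofNat 19 (cl x w) ∨ x = w + Fin.ofNat 19 (cl x w) := by
  decide +kernel

lemma ofNat_val : ∀ n : Fin 10, ((Fin.ofNat 19 n : Fin 19) : ℕ) = n := by decide

lemma eighteen : ∀ x : Fin 19, x - 1 = x + 18 := by decide

theorem second {Gf E : SimpleGraph (Fin 19)} (hf : Pan2 Gf) (hH : H1 ≤ Gf) (hc : Gf.edgeSet.ncard ≤ 24)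
    (hE : E ∈ CS Gf 19) (hne : E ≠ H1)
    (hroot : ∀ a : ℕ, 2 ≤ a → a ≤ 9 → rootCheck a = true) :
    ∃ (G' : SimpleGraph (Fin 19)) (A' : ℕ), Nonempty (G' ≃g Gf) ∧ isoT A' = true ∧ Rep 152 A' G' := by
  classical
  obtain ⟨x1, w1, h1⟩ := E_ex hE hne
  obtain ⟨⟨x, w⟩, hxw, hmax⟩ := Finset.exists_max_image
    (Finset.univ.filter (fun q : Fin 19 × Fin 19 => (E \ H1).Adj q.1 q.2)) (fun q => cl q.1 q.2)
    ⟨(x1, w1), by simpa using h1⟩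
  have hxw' : (E \ H1).Adj x w := (Finset.mem_filter.mp hxw).2
  have hb := cl_bound x w hxw'.ne (fun h => hxw'.2 ((H1_adj x w).mpr h))
  obtain ⟨a, ha⟩ : ∃ a : Fin 19, a = Fin.ofNat 19 (cl x w) := ⟨_, rfl⟩
  have hav : (a : ℕ) = cl x w := by
    rw [ha]; exact ofNat_val ⟨cl x w, by omega⟩
  have hmax' : ∀ u v, (E \ H1).Adj u v → cl u v ≤ a := by
    intro u v huv
    rw [hav]
    exact hmax (u, v) (Finset.mem_filter.mpr ⟨Finset.mem_univ _, huv⟩)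
  have hJ : ∃ y, (E \ H1).Adj y (y + a) := by
    rcases cl_cases x w with h | h
    · exact ⟨x, by rw [ha, ← h]; exact hxw'⟩
    · exact ⟨w, by rw [ha, ← h]; exact hxw'.symm⟩
  have ha0 : a ≠ 0 := by
    rintro rfl
    have : ((0 : Fin 19) : ℕ) = 0 := rfl
    omega
  obtain ⟨y, hy, hy'⟩ : ∃ y, (E \ H1).Adj y (y + a) ∧ ¬ (E \ H1).Adj (y + 18) (y + 18 + a) := by
    by_contra hn
    push Not at hn
    obtain ⟨y, hy⟩ := hJ
    have hall : ∀ n : ℕ, (E \ H1).Adj (y + n • (18 : Fin 19)) (y + n • (18 : Fin 19) + a) := by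
      intro n
      induction n with
      | zero => simpa using hy
      | succ n ih =>
        have := hn _ ih
        rwa [add_assoc y, ← succ_nsmul] at this
    have hcov : ∀ z d : Fin 19, ∃ n : Fin 19, z = d + (n : ℕ) • (18 : Fin 19) := by decide +kernel
    have h19 := many ha0 (T := E \ H1) (fun z => by
      obtain ⟨n, hn⟩ := hcov z y
      rw [hn]; exact hall n)
    have h5 := rem5 hH hc
    have hle : (E \ H1).edgeSet.ncard ≤ (Gf \ H1).edgeSet.ncard :=
      Set.ncard_le_ncard (SimpleGraph.edgeSet_subset_edgeSet.mpr (sdiff_le_sdiff_right hE.1)) (Set.toFinite _)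
    omega
  have hiso : Gf.comap (Equiv.addLeft y) ≃g Gf := SimpleGraph.Iso.comap _ _
  have hs : E.comap (Equiv.addLeft y) \ H1 = (E \ H1).comap (Equiv.addLeft y) := by
    rw [comap_sdiff, H1_rot]
  obtain ⟨A', h1, h2⟩ := core (Gf := Gf.comap (Equiv.addLeft y)) (E := E.comap (Equiv.addLeft y)) (a := a)
    (Pan2.iso hiso hf)
    (by
      have : H1.comap (Equiv.addLeft y) ≤ Gf.comap (Equiv.addLeft y) := fun _ _ h => hH h
      rwa [H1_rot] at this)
    (by rw [ncard_iso hiso]; exact hc) (CS_comap _ hE)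
    (by
      intro h
      apply hne
      rw [← H1_rot y] at h
      exact comap_inj _ h)
    (by omega) (by omega)
    (by
      rw [hs]
      intro u v huv
      rw [← cl_rot y]
      exact hmax' _ _ huv)
    (by
      rw [hs]
      show (E \ H1).Adj (y + 0) (y + (0 + a))
      rw [zero_add, add_zero]; exact hy)
    (by
      rw [hs]
      show ¬ (E \ H1).Adj (y + 18) (y + (18 + a))
      rw [← add_assoc]; exact hy')
    (hroot a (by omega) (by omega))
  exact ⟨_, A', ⟨hiso⟩, h1, h2⟩

/-! ### The three graphs -/

lemma s1_bit : ∀ x y : Fin 19, sol1.testBit (152 * (x : ℕ) + (y : ℕ)) =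
    (big el1).1.testBit (2000 * (x : ℕ) + (y : ℕ)) := by decide +kernel
lemma s2_bit : ∀ x y : Fin 19, sol2.testBit (152 * (x : ℕ) + (y : ℕ)) =
    (big el2).1.testBit (2000 * (x : ℕ) + (y : ℕ)) := by decide +kernel
lemma s3_bit : ∀ x y : Fin 19, sol3.testBit (152 * (x : ℕ) + (y : ℕ)) =
    (big el3).1.testBit (2000 * (x : ℕ) + (y : ℕ)) := by decide +kernel
lemma s4_bit : ∀ x y : Fin 19, sol4.testBit (152 * (x : ℕ) + (y : ℕ)) =
    sol1.testBit (152 * ((5 - x : Fin 19) : ℕ) + ((5 - y : Fin 19) : ℕ)) := by decide +kernel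
lemma s5_bit : ∀ x y : Fin 19, sol5.testBit (152 * (x : ℕ) + (y : ℕ)) =
    sol2.testBit (152 * ((5 - x : Fin 19) : ℕ) + ((5 - y : Fin 19) : ℕ)) := by decide +kernel
lemma s6_bit : ∀ x y : Fin 19, sol6.testBit (152 * (x : ℕ) + (y : ℕ)) =
    sol3.testBit (152 * ((5 - x : Fin 19) : ℕ) + ((5 - y : Fin 19) : ℕ)) := by decide +kernel

lemma rep_of_bits {A B : ℕ} {G : SimpleGraph (Fin 19)} (h : Rep 2000 B G)
    (hb : ∀ x y : Fin 19, A.testBit (152 * (x : ℕ) + (y : ℕ)) = B.testBit (2000 * (x : ℕ) + (y : ℕ))) :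
    Rep 152 A G := by
  intro x y
  rw [hb, h]

lemma s1_rep : Rep 152 sol1 (lg el1) := rep_of_bits (big_spec el1 (by rw [big1])).1 s1_bit
lemma s2_rep : Rep 152 sol2 (lg el2) := rep_of_bits (big_spec el2 (by rw [big2])).1 s2_bit
lemma s3_rep : Rep 152 sol3 (lg el3) := rep_of_bits (big_spec el3 (by rw [big3])).1 s3_bit

lemma refl_iso {A A' : ℕ} {G G' : SimpleGraph (Fin 19)} (h : Rep 152 A G) (h' : Rep 152 A' G')
    (hb : ∀ x y : Fin 19, A.testBit (152 * (x : ℕ) + (y : ℕ)) =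
      A'.testBit (152 * ((5 - x : Fin 19) : ℕ) + ((5 - y : Fin 19) : ℕ))) : Nonempty (G ≃g G') := by
  refine ⟨⟨Equiv.subLeft 5, ?_⟩⟩
  intro x y
  rw [Equiv.subLeft_apply, Equiv.subLeft_apply, ← h', ← hb, h]

/-- The three graphs. -/
def Gs (i : Fin 3) : SimpleGraph (Fin 19) := if i = 0 then lg el1 else if i = 1 then lg el2 else lg el3

lemma sols {A : ℕ} {G : SimpleGraph (Fin 19)} (hA : isoT A = true) (h : Rep 152 A G) :
    ∃ i, Nonempty (G ≃g Gs i) := by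
  have h0 : Gs 0 = lg el1 := rfl
  have h1 : Gs 1 = lg el2 := rfl
  have h2 : Gs 2 = lg el3 := rfl
  unfold isoT at hA
  simp only [Bool.or_eq_true, nbeq] at hA
  rcases hA with rfl | rfl | rfl | rfl | rfl | rfl
  · refine ⟨0, ?_⟩; rw [h0, h.unique s1_rep]; exact ⟨SimpleGraph.Iso.refl⟩
  · refine ⟨1, ?_⟩; rw [h1, h.unique s2_rep]; exact ⟨SimpleGraph.Iso.refl⟩
  · refine ⟨2, ?_⟩; rw [h2, h.unique s3_rep]; exact ⟨SimpleGraph.Iso.refl⟩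
  · refine ⟨0, ?_⟩; rw [h0]; exact refl_iso h s1_rep s4_bit
  · refine ⟨1, ?_⟩; rw [h1]; exact refl_iso h s2_rep s5_bit
  · refine ⟨2, ?_⟩; rw [h2]; exact refl_iso h s3_rep s6_bit

lemma lg_ncard : ∀ l : List (Fin 19 × Fin 19), (lg l).edgeSet.ncard ≤ l.length := by
  intro l
  induction l with
  | nil => simp [lg]
  | cons q t ih =>
    obtain ⟨x, y⟩ := q
    rw [lg, SimpleGraph.edgeSet_sup, List.length_cons]
    refine (Set.ncard_union_le _ _).trans ?_
    have h1 : (edge x y).edgeSet.ncard ≤ 1 := by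
      have hs : (edge x y).edgeSet ⊆ {s(x, y)} := by
        intro e he
        induction e with
        | _ u v =>
          rw [SimpleGraph.mem_edgeSet, SimpleGraph.edge_adj] at he
          rw [Set.mem_singleton_iff, Sym2.eq_iff]
          exact he.1
      have := Set.ncard_le_ncard hs (Set.toFinite _)
      rwa [Set.ncard_singleton] at this
    omega

lemma lg_pan {l : List (Fin 19 × Fin 19)}
    (h : (big l).2 = (∑ i ∈ Finset.range 18, (2 ^ 100) ^ i * (if i = 0 then 0 else 2), true)) :
    IsRPancyclic (lg l) 2 := by
  have h1 := (big_spec l (by rw [h])).2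
  rw [h] at h1
  refine ⟨by simp, ?_⟩
  intro k hk3 hk
  rw [Fintype.card_fin] at hk
  obtain ⟨i, rfl⟩ : ∃ i, k = i + 2 := ⟨k - 2, by omega⟩
  have h2 := h1.inj (fun i => if i = 0 then 0 else 2) (by
    intro i _
    split_ifs <;> norm_num) rfl (i := i) (by omega)
  unfold cd at h2
  have hi : i ≠ 0 := by omega
  simpa [hi] using h2

open Classical in
/-- The number of vertices of degree four. -/
noncomputable def dn (G : SimpleGraph (Fin 19)) : ℕ :=
  (Finset.univ.filter (fun v => (Finset.univ.filter (fun w => G.Adj v w)).card = 4)).card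

lemma dn_iso {G G' : SimpleGraph (Fin 19)} (e : G ≃g G') : dn G = dn G' := by
  classical
  unfold dn
  refine Finset.card_bij (fun v _ => e v) ?_ (fun a _ b _ h => e.injective h) ?_
  · intro v hv
    simp only [Finset.mem_filter, Finset.mem_univ, true_and] at hv ⊢
    rw [← hv]
    refine (Finset.card_bij (fun w _ => e w) ?_ (fun a _ b _ h => e.injective h) ?_).symm
    · intro w hw
      simpa [e.map_adj_iff] using hw
    · intro w hw
      refine ⟨e.symm w, ?_, by simp⟩
      have hw' : G'.Adj (e v) w := by simpa using hw
      have h2 : G'.Adj (e v) (e (e.symm w)) := by rwa [e.apply_symm_apply]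
      simpa using e.map_adj_iff.mp h2
  · intro v hv
    refine ⟨e.symm v, ?_, by simp⟩
    simp only [Finset.mem_filter, Finset.mem_univ, true_and] at hv ⊢
    rw [← hv]
    refine (Finset.card_bij (fun w _ => e.symm w) ?_ (fun a _ b _ h => e.symm.injective h) ?_).symm
    · intro w hw
      simpa [e.symm.map_adj_iff] using hw
    · intro w hw
      refine ⟨e w, ?_, by simp⟩
      have hw' : G.Adj (e.symm v) w := by simpa using hw
      have h2 : G.Adj (e.symm v) (e.symm (e w)) := by rwa [e.symm_apply_apply]
      simpa using e.symm.map_adj_iff.mp h2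

def dnN (A : ℕ) : ℕ := (Finset.univ.filter (fun v : Fin 19 =>
  (Finset.univ.filter (fun w : Fin 19 => A.testBit (152 * (v : ℕ) + (w : ℕ)) = true)).card = 4)).card

lemma dn_rep {A : ℕ} {G : SimpleGraph (Fin 19)} (h : Rep 152 A G) : dn G = dnN A := by
  classical
  unfold dn dnN
  refine congrArg Finset.card (Finset.filter_congr fun v _ => ?_)
  have h1 : (Finset.univ.filter (fun w => G.Adj v w)) =
      (Finset.univ.filter (fun w : Fin 19 => A.testBit (152 * (v : ℕ) + (w : ℕ)) = true)) :=
    Finset.filter_congr fun w _ => (h v w).symm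
  rw [← h1]

lemma dn1 : dnN sol1 = 2 := by decide +kernel
lemma dn2 : dnN sol2 = 0 := by decide +kernel
lemma dn3 : dnN sol3 = 1 := by decide +kernel

lemma dn_Gs : ∀ i : Fin 3, dn (Gs i) = if i = 0 then 2 else if i = 1 then 0 else 1 := by
  intro i
  unfold Gs
  split_ifs
  · rw [dn_rep s1_rep, dn1]
  · rw [dn_rep s2_rep, dn2]
  · rw [dn_rep s3_rep, dn3]

lemma dn_inj : ∀ i j : Fin 3, i ≠ j → (if i = 0 then 2 else if i = 1 then 0 else 1) ≠
    (if j = 0 then 2 else if j = 1 then 0 else 1) := by decide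

lemma Gs_pan (i : Fin 3) : IsRPancyclic (Gs i) 2 ∧ (Gs i).edgeSet.ncard ≤ 24 := by
  unfold Gs
  split_ifs
  · exact ⟨lg_pan big1, (lg_ncard el1).trans (by decide)⟩
  · exact ⟨lg_pan big2, (lg_ncard el2).trans (by decide)⟩
  · exact ⟨lg_pan big3, (lg_ncard el3).trans (by decide)⟩

theorem main (hroot : ∀ a : ℕ, 2 ≤ a → a ≤ 9 → rootCheck a = true) : ExactlyNUpToIso 2 3 19 24 := by
  refine ⟨Gs, ?_, Gs_pan, ?_⟩
  · intro i j hij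
    refine ⟨fun e => ?_⟩
    have h := dn_iso e
    rw [dn_Gs, dn_Gs] at h
    exact dn_inj i j hij h
  · intro W _ G hW hc hG
    have hp : ∀ i, 1 ≤ i → i < 18 → cycleCount G (i + 2) = 2 := by
      intro i h1 h2
      exact hG.2 (i + 2) (by omega) (by omega)
    have h17 := hp 17 (by norm_num) (by norm_num)
    rw [cycleCount_eq, Set.ncard_eq_two] at h17
    obtain ⟨C1, C2, hne, hs⟩ := h17
    have hC1 : C1 ∈ CS G 19 := by
      have : C1 ∈ CS G (17 + 2) := by rw [hs]; simp
      exact this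
    have hC2 : C2 ∈ CS G 19 := by
      have : C2 ∈ CS G (17 + 2) := by rw [hs]; simp
      exact this
    obtain ⟨hle, p, hpC⟩ := hC1
    have hbij : Function.Bijective p := by
      rw [Fintype.bijective_iff_injective_and_card]
      exact ⟨p.injective, by rw [hW, Fintype.card_fin]⟩
    obtain ⟨q, hq⟩ : ∃ q : Fin 19 ≃ W, ∀ i, q i = p i := ⟨Equiv.ofBijective p hbij, fun _ => rfl⟩
    have hH : C1.comap q = H1 := by
      ext a b
      rw [SimpleGraph.comap_adj, hpC, hq, hq, SimpleGraph.map_adj_apply]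
    have hiso : G.comap q ≃g G := SimpleGraph.Iso.comap _ _
    obtain ⟨G', A', ⟨e⟩, h1, h2⟩ := second (Gf := G.comap q) (E := C2.comap q) (Pan2.iso hiso hp)
      (by rw [← hH]; exact fun _ _ h => hle h)
      (by rw [ncard_iso hiso]; exact hc) (CS_comap q hC2)
      (by
        intro h
        apply hne
        rw [← hH] at h
        exact (comap_inj _ h).symm) hroot
    obtain ⟨i, ⟨e'⟩⟩ := sols h1 h2
    exact ⟨i, ⟨(hiso.symm.trans e.symm).trans e'⟩⟩

end Pan
end

namespace Pan

theorem root2 : rootCheck 2 = true := by decide +kernel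
theorem root3 : rootCheck 3 = true := by decide +kernel
theorem root4 : rootCheck 4 = true := by decide +kernel
theorem root5 : rootCheck 5 = true := by decide +kernel
theorem root6 : rootCheck 6 = true := by decide +kernel
theorem root7 : rootCheck 7 = true := by decide +kernel
theorem root8 : rootCheck 8 = true := by decide +kernel
theorem root9 : rootCheck 9 = true := by decide +kernel

theorem roots : ∀ a : ℕ, 2 ≤ a → a ≤ 9 → rootCheck a = true := by
  intro a h2 h9
  interval_cases a
  · exact root2
  · exact root3
  · exact root4
  · exact root5
  · exact root6
  · exact root7
  · exact root8
  · exact root9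

end Pan

theorem two_pancyclic_count_order_19 : ExactlyNUpToIso 2 3 19 24 :=
  Pan.main Pan.roots
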